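/- arXiv:1712.05129 — 4 statements merged into one kernel-verified Lean document; each statement's English description precedes it below -/
import Mathlib

section
/- A countable amenable group G has the comparison property if and only if it has the Banach density comparison property. -/
/-!
STATEMENT 11 (Theorem `ujowe` of the paper):
A countable amenable group `G` has the comparison property iff it has the Banach
density comparison property.
-/

open Filter Topology Pointwise MeasureTheory
open scoped Classical

noncomputable def cnt {G : Type*} [Group G] (F : Finset G) (B : Set G) (g : G) : ℝ :=
  ((B ∩ ((F : Set G) * {g})).ncard : ℝ) / F.card

noncomputable def advD {G : Type*} [Group G] (F : Finset G) (B A : Set G) : ℝ :=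
  ⨅ g : G, (cnt F B g - cnt F A g)

def IsFolner {G : Type*} [Group G] (F : ℕ → Finset G) : Prop :=
  (∀ n, (F n).Nonempty) ∧
  ∀ g : G, Tendsto
    (fun n => (((({g} : Set G) * (F n : Set G)) ∩ (F n : Set G)).ncard : ℝ) / (F n).card)
    atTop (𝓝 1)

/-- `A ≼ B` for an action of `G` on `X`. -/
def Subequiv (G : Type*) [Group G] (X : Type*) [TopologicalSpace X] [MulAction G X]
    (A B : Set X) : Prop :=
  ∃ (k : ℕ) (Ai : Fin k → Set X) (g : Fin k → G),
    (∀ i, IsClopen (Ai i)) ∧ A = ⋃ i, Ai i ∧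
    (Pairwise fun i j => Disjoint (Ai i) (Ai j)) ∧
    (∀ i, g i • Ai i ⊆ B) ∧
    (Pairwise fun i j => Disjoint (g i • Ai i) (g j • Ai j))

/-- The action of `G` on `X` admits comparison. -/
def AdmitsComparison (G : Type*) [Group G] (X : Type*) [TopologicalSpace X]
    [MeasurableSpace X] [MulAction G X] : Prop :=
  ∀ A B : Set X, IsClopen A → IsClopen B →
    (∀ μ : Measure X, IsProbabilityMeasure μ → SMulInvariantMeasure G X μ → μ A < μ B) →
    Subequiv G X A B

/-- `G` has the comparison property: every action of `G` by homeomorphisms on a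
zero-dimensional compact metric space admits comparison. -/
def ComparisonProperty (G : Type*) [Group G] : Prop :=
  ∀ (X : Type) [TopologicalSpace X] [CompactSpace X] [TopologicalSpace.MetrizableSpace X]
    [TotallyDisconnectedSpace X] [MeasurableSpace X] [BorelSpace X]
    [MulAction G X] [ContinuousConstSMul G X],
    AdmitsComparison G X

/-- The shift action of `G` on `Λ^G`: `(h(x))_g = x_{gh}`. -/
def shiftMap {G : Type*} [Group G] {Λ : Type*} (h : G) (x : G → Λ) : G → Λ :=
  fun g => x (g * h)

/-- The point `y^{AB} ∈ {0,1,2}^G` determined by disjoint `A, B ⊆ G`. -/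
noncomputable def yab {G : Type*} [Group G] (A B : Set G) : G → Fin 3 :=
  fun g => if g ∈ A then 1 else if g ∈ B then 2 else 0

/-- `G` has the Banach density comparison property: whenever `A, B ⊆ G` are disjoint and
the Banach density advantage `D(B,A)` (computed along a Følner sequence) is positive,
there is an injection `φ̃ : A → B` determined by a block code evaluated along the
transitive point `y^{AB}` of the subshift `Y^{AB}`. -/
def BDComparisonProperty (G : Type*) [Group G] : Prop :=
  ∀ A B : Set G, Disjoint A B →
    (∃ Fs : ℕ → Finset G, IsFolner Fs ∧
      0 < limsup (fun n => advD (Fs n) B A) atTop) →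
    ∃ φt : G → G,
      (∃ (F E : Finset G) (Ξ : (↥(F : Set G) → Fin 3) → G),
        (∀ b, Ξ b ∈ E) ∧
        ∀ a : G, φt a = Ξ (fun f => shiftMap a (yab A B) f.1) * a) ∧
      Set.MapsTo φt A B ∧ Set.InjOn φt A


/-! ### Preliminary estimates -/

def hv (i : Fin 3) : ℤ := if i = 1 then -1 else if i = 2 then 1 else 0

lemma abs_hv_le (i : Fin 3) : |((hv i : ℤ) : ℝ)| ≤ 1 := by
  fin_cases i <;> simp [hv]

lemma hv_le_one (i : Fin 3) : hv i ≤ 1 := by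
  fin_cases i <;> simp [hv]

lemma sum_shift_diff {G : Type*} [Group G] (K : Finset G) (g : G) (v : G → ℝ) (C : ℝ)
    (hv : ∀ k, |v k| ≤ C) :
    |∑ k ∈ K, v (g * k) - ∑ k ∈ K, v k| ≤
      2 * C * ((K.card : ℝ) - (((({g} : Set G) * (K : Set G)) ∩ (K : Set G)).ncard : ℝ)) := by
  set K' : Finset G := K.image (fun k => g * k) with hK'
  have h1 : ∑ k ∈ K, v (g * k) = ∑ k ∈ K', v k := by
    rw [hK', Finset.sum_image]
    intro a _ b _ h
    exact mul_left_cancel h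
  have hcard : K'.card = K.card :=
    Finset.card_image_of_injective _ (fun a b h => mul_left_cancel h)
  have h2 : ((({g} : Set G) * (K : Set G)) ∩ (K : Set G)) = ((K' ∩ K : Finset G) : Set G) := by
    simp [hK', Set.singleton_mul]
  rw [h2, Set.ncard_coe_finset, h1]
  have h3 := Finset.sum_inter_add_sum_sdiff K' K v
  have h4 := Finset.sum_inter_add_sum_sdiff K K' v
  have c3 := Finset.card_inter_add_card_sdiff K' K
  have c4 := Finset.card_inter_add_card_sdiff K K'
  rw [Finset.inter_comm] at h4 c4
  have b : ∀ s : Finset G, |∑ k ∈ s, v k| ≤ C * s.card := by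
    intro s
    calc |∑ k ∈ s, v k| ≤ ∑ k ∈ s, |v k| := Finset.abs_sum_le_sum_abs _ _
      _ ≤ ∑ k ∈ s, C := Finset.sum_le_sum (fun k _ => hv k)
      _ = C * s.card := by simp [mul_comm]
  have b3 := abs_le.1 (b (K' \ K))
  have b4 := abs_le.1 (b (K \ K'))
  have c3' : ((K' ∩ K).card : ℝ) + (K' \ K).card = K.card := by
    rw [← hcard]; exact_mod_cast c3
  have c4' : ((K' ∩ K).card : ℝ) + (K \ K').card = K.card := by
    exact_mod_cast c4
  have e3 : ((K' \ K).card : ℝ) = K.card - (K' ∩ K).card := by linarith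
  have e4 : ((K \ K').card : ℝ) = K.card - (K' ∩ K).card := by linarith
  rw [e3] at b3
  rw [e4] at b4
  rw [abs_le]
  constructor <;> nlinarith [b3.1, b3.2, b4.1, b4.2]

lemma ncard_eq_sum {G : Type*} [Group G] (F : Finset G) (B : Set G) (g : G) :
    ((B ∩ ((F : Set G) * {g})).ncard : ℤ) = ∑ f ∈ F, if f * g ∈ B then 1 else 0 := by
  have : B ∩ ((F : Set G) * {g}) =
      (((F.filter (fun f => f * g ∈ B)).image (fun f => f * g) : Finset G) : Set G) := by
    ext x
    simp only [Set.mul_singleton, Set.mem_inter_iff, Set.mem_image, Finset.mem_coe,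
      Finset.coe_image, Finset.coe_filter, Set.mem_ofPred_eq]
    constructor
    · rintro ⟨hB, f, hf, rfl⟩
      exact ⟨f, ⟨hf, hB⟩, rfl⟩
    · rintro ⟨f, ⟨hf, hB⟩, rfl⟩
      exact ⟨hB, f, hf, rfl⟩
  rw [this, Set.ncard_coe_finset, Finset.card_image_of_injective _
    (fun a b h => mul_right_cancel h)]
  simp

lemma cnt_diff {G : Type*} [Group G] (F : Finset G) (A B : Set G) (hAB : Disjoint A B) (g : G) :
    cnt F B g - cnt F A g = ((∑ f ∈ F, hv (yab A B (f * g)) : ℤ) : ℝ) / F.card := by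
  unfold cnt
  rw [← sub_div]
  congr 1
  have : (∑ f ∈ F, hv (yab A B (f * g)) : ℤ) =
      ((B ∩ ((F : Set G) * {g})).ncard : ℤ) - ((A ∩ ((F : Set G) * {g})).ncard : ℤ) := by
    rw [ncard_eq_sum, ncard_eq_sum, ← Finset.sum_sub_distrib]
    refine Finset.sum_congr rfl (fun f _ => ?_)
    by_cases hA : f * g ∈ A
    · have hB : f * g ∉ B := fun h => Set.disjoint_left.1 hAB hA h
      simp [yab, hv, hA, hB]
    · by_cases hB : f * g ∈ B <;> simp [yab, hv, hA, hB]
  rw [this]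
  push_cast
  rfl

lemma abs_cnt_diff_le {G : Type*} [Group G] (F : Finset G) (A B : Set G) (hAB : Disjoint A B)
    (g : G) : |cnt F B g - cnt F A g| ≤ 1 := by
  rw [cnt_diff F A B hAB, abs_div, Nat.abs_cast]
  refine div_le_one_of_le₀ ?_ (Nat.cast_nonneg _)
  push_cast
  calc |∑ f ∈ F, ((hv (yab A B (f * g)) : ℤ) : ℝ)|
      ≤ ∑ f ∈ F, |((hv (yab A B (f * g)) : ℤ) : ℝ)| := Finset.abs_sum_le_sum_abs _ _
    _ ≤ ∑ f ∈ F, 1 := Finset.sum_le_sum (fun k _ => abs_hv_le _)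
    _ = F.card := by simp

lemma bddBelow_cnt {G : Type*} [Group G] (F : Finset G) (A B : Set G) (hAB : Disjoint A B) :
    BddBelow (Set.range fun g => cnt F B g - cnt F A g) := by
  refine ⟨-1, ?_⟩
  rintro _ ⟨g, rfl⟩
  exact (abs_le.1 (abs_cnt_diff_le F A B hAB g)).1

lemma advD_le_one {G : Type*} [Group G] (F : Finset G) (A B : Set G) (hAB : Disjoint A B) :
    advD F B A ≤ 1 :=
  (ciInf_le (bddBelow_cnt F A B hAB) 1).trans (abs_le.1 (abs_cnt_diff_le F A B hAB 1)).2

lemma advD_ge_neg_one {G : Type*} [Group G] (F : Finset G) (A B : Set G) (hAB : Disjoint A B) :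
    -1 ≤ advD F B A :=
  le_ciInf (fun g => (abs_le.1 (abs_cnt_diff_le F A B hAB g)).1)

lemma exists_window {G : Type*} [Group G] (A B : Set G) (hAB : Disjoint A B)
    (Fs : ℕ → Finset G) (h : 0 < limsup (fun n => advD (Fs n) B A) atTop) :
    ∃ F : Finset G, ∀ g, 1 ≤ ∑ f ∈ F, hv (yab A B (f * g)) := by
  have hfr : ∃ᶠ n in atTop, 0 < advD (Fs n) B A := by
    refine frequently_lt_of_lt_limsup ?_ h
    exact isCoboundedUnder_le_of_le _ (x := -1) (fun n => advD_ge_neg_one (Fs n) A B hAB)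
  obtain ⟨n, hn⟩ := hfr.exists
  refine ⟨Fs n, fun g => ?_⟩
  have h1 : 0 < cnt (Fs n) B g - cnt (Fs n) A g :=
    lt_of_lt_of_le hn (ciInf_le (bddBelow_cnt (Fs n) A B hAB) g)
  rw [cnt_diff _ A B hAB] at h1
  by_contra hcon
  have h2 : ∑ f ∈ Fs n, hv (yab A B (f * g)) ≤ 0 := by linarith [not_le.1 hcon]
  have h3 : ((∑ f ∈ Fs n, hv (yab A B (f * g)) : ℤ) : ℝ) ≤ 0 := by exact_mod_cast h2
  exact absurd h1 (not_lt.2 (div_nonpos_of_nonpos_of_nonneg h3 (Nat.cast_nonneg _)))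

lemma limsup_pos {G : Type*} [Group G] (A B : Set G) (hAB : Disjoint A B)
    (Fs : ℕ → Finset G) (hF : IsFolner Fs) (F : Finset G)
    (hg : ∀ g, 1 ≤ ∑ f ∈ F, hv (yab A B (f * g))) :
    0 < limsup (fun n => advD (Fs n) B A) atTop := by
  have hFne : 0 < (F.card : ℝ) := by
    rcases F.eq_empty_or_nonempty with rfl | h
    · have := hg 1
      simp at this
    · exact_mod_cast h.card_pos
  have hev : ∀ᶠ n in atTop, 1 / (2 * (F.card : ℝ)) ≤ advD (Fs n) B A := by
    have h1 : ∀ᶠ n in atTop, ∀ f ∈ F, 1 - 1 / (4 * (F.card : ℝ)) <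
        (((({f} : Set G) * (Fs n : Set G)) ∩ (Fs n : Set G)).ncard : ℝ) / (Fs n).card := by
      rw [Filter.eventually_all_finset]
      intro f _
      refine (hF.2 f).eventually (lt_mem_nhds ?_)
      have : 0 < 1 / (4 * (F.card : ℝ)) := by positivity
      linarith
    filter_upwards [h1] with n hn
    refine le_ciInf (fun g0 => ?_)
    rw [cnt_diff _ A B hAB]
    have hK : 0 < ((Fs n).card : ℝ) := by exact_mod_cast (hF.1 n).card_pos
    set u : G → ℝ := fun k => ((hv (yab A B (k * g0)) : ℤ) : ℝ) with hu
    have e1 : ((∑ f ∈ Fs n, hv (yab A B (f * g0)) : ℤ) : ℝ) = ∑ k ∈ Fs n, u k := by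
      push_cast; rfl
    rw [e1]
    have e2 : ((Fs n).card : ℝ) ≤ ∑ k ∈ Fs n, ∑ f ∈ F, u (f * k) := by
      calc ((Fs n).card : ℝ) = ∑ k ∈ Fs n, (1 : ℝ) := by simp
        _ ≤ _ := Finset.sum_le_sum (fun k _ => by
          have := hg (k * g0)
          simp only [hu, mul_assoc]
          exact_mod_cast this)
    rw [Finset.sum_comm] at e2
    have e3 : ∑ f ∈ F, ∑ k ∈ Fs n, u (f * k) ≤
        ∑ f ∈ F, (∑ k ∈ Fs n, u k + 2 * ((Fs n).card * (1 / (4 * (F.card : ℝ))))) := by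
      refine Finset.sum_le_sum (fun f hf => ?_)
      have a1 := (abs_le.1 (sum_shift_diff (Fs n) f u 1 (fun k => abs_hv_le _))).2
      have a2 := hn f hf
      rw [lt_div_iff₀ hK] at a2
      linarith
    rw [Finset.sum_const, nsmul_eq_mul] at e3
    have e4 : (F.card : ℝ) * (2 * ((Fs n).card * (1 / (4 * (F.card : ℝ))))) =
        (Fs n).card / 2 := by
      field_simp; ring
    rw [div_le_div_iff₀ (by positivity) hK]
    linarith
  have : 0 < 1 / (2 * (F.card : ℝ)) := by positivity
  refine lt_of_lt_of_le this (le_limsup_of_frequently_le hev.frequently ?_)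
  exact isBoundedUnder_of ⟨1, fun n => advD_le_one (Fs n) A B hAB⟩

/-! ### Invariant measures from Følner averages -/

lemma exists_emp {G : Type*} [Group G] {X : Type*} [TopologicalSpace X] [MeasurableSpace X]
    [BorelSpace X] [MulAction G X] (K : Finset G) (hK : K.Nonempty) (x : X) :
    ∃ ν : ProbabilityMeasure X,
      (∀ v : X → ℝ, Continuous v →
        ∫ z, v z ∂(ν : Measure X) = (K.card : ℝ)⁻¹ * ∑ f ∈ K, v (f • x)) := by
  have hne : (K.card : ENNReal) ≠ 0 := by
    have := hK.card_pos
    exact_mod_cast this.ne'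
  let m : Measure X := (K.card : ENNReal)⁻¹ • ∑ f ∈ K, Measure.dirac (f • x)
  have hm : IsProbabilityMeasure m := by
    constructor
    simp only [m, Measure.smul_apply, Measure.finsetSum_apply, measure_univ, Finset.sum_const,
      smul_eq_mul, nsmul_eq_mul, mul_one]
    exact ENNReal.inv_mul_cancel hne (ENNReal.natCast_ne_top _)
  refine ⟨⟨m, hm⟩, fun v hv => ?_⟩
  have hint : ∀ f ∈ K, Integrable v (Measure.dirac (f • x)) := by
    intro f _
    exact integrable_dirac' hv.stronglyMeasurable (by simp)
  show ∫ z, v z ∂m = _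
  simp only [m]
  rw [integral_smul_measure, integral_finsetSum_measure hint]
  simp only [integral_dirac' _ _ hv.stronglyMeasurable, smul_eq_mul]
  simp

lemma exists_inv_measure {G : Type*} [Group G] {X : Type*} [TopologicalSpace X] [CompactSpace X]
    [TopologicalSpace.MetrizableSpace X] [MeasurableSpace X]
    [BorelSpace X] [MulAction G X] [ContinuousConstSMul G X]
    (Fs : ℕ → Finset G) (hF : IsFolner Fs) (x : ℕ → X) :
    ∃ μ : Measure X, IsProbabilityMeasure μ ∧ SMulInvariantMeasure G X μ ∧
      ∀ v : X → ℝ, Continuous v → (∀ n, ∑ f ∈ Fs n, v (f • x n) ≤ 0) →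
        ∫ z, v z ∂μ ≤ 0 := by
  choose ν hν using fun n => exists_emp (Fs n) (hF.1 n) (x n)
  let U : Ultrafilter ℕ := hyperfilter ℕ
  have hUtop : (U : Filter ℕ) ≤ atTop := by
    rw [← Nat.cofinite_eq_atTop]; exact hyperfilter_le_cofinite
  obtain ⟨μ, -, hμ⟩ := (isCompact_univ (X := ProbabilityMeasure X)).ultrafilter_le_nhds
    (U.map ν) (by simp)
  have hμ' : Tendsto ν U (𝓝 μ) := hμ
  have hlim : ∀ v : C(X, ℝ), Tendsto (fun n => ((Fs n).card : ℝ)⁻¹ * ∑ f ∈ Fs n, v (f • x n)) U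
      (𝓝 (∫ z, v z ∂(μ : Measure X))) := by
    intro v
    have := ProbabilityMeasure.tendsto_iff_forall_integral_tendsto.1 hμ'
      (BoundedContinuousFunction.mkOfCompact v)
    refine this.congr (fun n => ?_)
    simpa using hν n v v.continuous
  refine ⟨μ, inferInstance, ?_, ?_⟩
  · constructor
    intro c s hs
    have hcont : Continuous (fun z : X => c • z) := continuous_const_smul c
    rw [← Measure.map_apply hcont.measurable hs]
    congr 1
    have : IsProbabilityMeasure (Measure.map (fun z : X => c • z) (μ : Measure X)) :=
      Measure.isProbabilityMeasure_map hcont.measurable.aemeasurable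
    refine ext_of_forall_integral_eq_of_IsFiniteMeasure (fun v => ?_)
    rw [integral_map hcont.measurable.aemeasurable
      v.continuous.stronglyMeasurable.aestronglyMeasurable]
    have l1 := hlim ⟨fun z => v (c • z), v.continuous.comp hcont⟩
    have l2 := hlim ⟨v, v.continuous⟩
    have l3 := l1.sub l2
    refine sub_eq_zero.1 (tendsto_nhds_unique l3 ?_)
    have l4 : Tendsto (fun n => 2 * ‖v‖ * (1 -
        (((({c} : Set G) * (Fs n : Set G)) ∩ (Fs n : Set G)).ncard : ℝ) / (Fs n).card))
        U (𝓝 0) := by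
      have := (((hF.2 c).mono_left hUtop).const_sub 1).const_mul (2 * ‖v‖)
      simpa using this
    refine squeeze_zero_norm (fun n => ?_) l4
    have hK : 0 < ((Fs n).card : ℝ) := by exact_mod_cast (hF.1 n).card_pos
    have key := sum_shift_diff (Fs n) c (fun k => v (k • x n)) ‖v‖
      (fun k => v.norm_coe_le_norm _)
    simp only [ContinuousMap.coe_mk, ← mul_sub, smul_smul, Real.norm_eq_abs, abs_mul]
    rw [abs_of_pos (inv_pos.2 hK), inv_mul_le_iff₀ hK]
    refine key.trans (le_of_eq ?_)
    field_simp
  · intro v hv hn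
    refine le_of_tendsto' (hlim ⟨v, hv⟩) (fun n => ?_)
    exact mul_nonpos_of_nonneg_of_nonpos (by positivity) (hn n)

lemma subequiv_of_code {G : Type*} [Group G] {X : Type*} [TopologicalSpace X] [MulAction G X]
    (A B : Set X) (hA : IsClopen A) (ξ : X → G) (hξ : ∀ g, IsClopen (ξ ⁻¹' {g}))
    (hfin : (Set.range ξ).Finite) (hmaps : ∀ x ∈ A, ξ x • x ∈ B)
    (hinj : ∀ x ∈ A, ∀ y ∈ A, ξ x • x = ξ y • y → x = y) : Subequiv G X A B := by
  have e := (hfin.toFinset).equivFin.symm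
  refine ⟨_, fun i => A ∩ ξ ⁻¹' {(e i : G)}, fun i => (e i : G), fun i => hA.inter (hξ _),
    ?_, ?_, ?_, ?_⟩
  · ext x
    simp only [Set.mem_iUnion, Set.mem_inter_iff, Set.mem_preimage, Set.mem_singleton_iff]
    constructor
    · intro hx
      exact ⟨e.symm ⟨ξ x, by simp⟩, hx, by simp⟩
    · rintro ⟨i, hx, _⟩
      exact hx
  · intro i j hij
    rw [Set.disjoint_left]
    rintro x ⟨_, h1⟩ ⟨_, h2⟩
    apply hij
    apply e.injective
    apply Subtype.ext
    simp only [Set.mem_preimage, Set.mem_singleton_iff] at h1 h2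
    rw [← h1, ← h2]
  · rintro i _ ⟨x, ⟨hx, h1⟩, rfl⟩
    have := hmaps x hx
    rw [Set.mem_preimage, Set.mem_singleton_iff] at h1
    rwa [h1] at this
  · intro i j hij
    rw [Set.disjoint_left]
    rintro _ ⟨x, ⟨hx, h1⟩, rfl⟩ ⟨y, ⟨hy, h2⟩, hxy⟩
    apply hij
    apply e.injective
    apply Subtype.ext
    simp only [Set.mem_preimage, Set.mem_singleton_iff] at h1 h2 hxy
    rw [← h1, ← h2] at hxy
    have := hinj y hy x hx hxy
    rw [← h1, ← h2, this]

/-! ### Combinatorial core -/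

lemma yab_self {G : Type*} [Group G] (y : G → Fin 3) : yab {g | y g = 1} {g | y g = 2} = y := by
  funext g
  have h : ∀ i : Fin 3, i = 0 ∨ i = 1 ∨ i = 2 := by decide
  rcases h (y g) with h | h | h <;> simp [yab, h]

lemma bd_apply {G : Type*} [Group G] (hBD : BDComparisonProperty G)
    (Fs : ℕ → Finset G) (hFs : IsFolner Fs) (F : Finset G) (y : G → Fin 3)
    (hy : ∀ g, 1 ≤ ∑ f ∈ F, hv (y (f * g))) :
    ∃ (F' E : Finset G) (Ξ : (↥F' → Fin 3) → G), (∀ b, Ξ b ∈ E) ∧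
      (∀ a, y a = 1 → y (Ξ (fun f => y (f.1 * a)) * a) = 2) ∧
      (∀ a b, y a = 1 → y b = 1 →
        Ξ (fun f => y (f.1 * a)) * a = Ξ (fun f => y (f.1 * b)) * b → a = b) := by
  have hdisj : Disjoint {g | y g = 1} {g | y g = 2} := by
    rw [Set.disjoint_left]
    intro g h1 h2
    simp only [Set.mem_ofPred_eq] at h1 h2
    rw [h1] at h2
    exact absurd h2 (by decide)
  obtain ⟨φ, ⟨F', E, Ξ, hE, hφ⟩, hmaps, hinj⟩ := hBD _ _ hdisj
    ⟨Fs, hFs, limsup_pos _ _ hdisj Fs hFs F (by simpa only [yab_self] using hy)⟩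
  simp only [yab_self, shiftMap] at hφ
  refine ⟨F', E, Ξ, hE, ?_, ?_⟩
  · intro a ha
    have := hmaps (show a ∈ {g | y g = 1} from ha)
    rw [hφ] at this
    exact this
  · intro a b ha hb hab
    refine hinj (show a ∈ {g | y g = 1} from ha) (show b ∈ {g | y g = 1} from hb) ?_
    rw [hφ, hφ]
    exact hab

lemma local_code {G : Type*} [Group G] (y p : G → Fin 3) (t : G) (F' E : Finset G)
    (Ξ : (↥F' → Fin 3) → G) (hE : ∀ b, Ξ b ∈ E)
    (h2 : ∀ a, y a = 1 → y (Ξ (fun f => y (f.1 * a)) * a) = 2)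
    (h3 : ∀ a b, y a = 1 → y b = 1 →
        Ξ (fun f => y (f.1 * a)) * a = Ξ (fun f => y (f.1 * b)) * b → a = b)
    (hp : ∀ q ∈ F' ∪ {1} ∪ E ∪ E⁻¹ * E ∪ F' * (E⁻¹ * E), p q = y (q * t)) (hp1 : p 1 = 1) :
    p (Ξ (fun f => p f.1)) = 2 ∧
    ∀ a, p a = 1 → Ξ (fun f => p f.1) = Ξ (fun f => p (f.1 * a)) * a → a = 1 := by
  have e1 : (fun f : ↥F' => p f.1) = fun f : ↥F' => y (f.1 * t) := by
    funext f
    exact hp _ (by simp [f.2])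
  have ht : y t = 1 := by
    have := hp 1 (by simp)
    rw [one_mul] at this
    rw [← this, hp1]
  refine ⟨?_, ?_⟩
  · rw [hp _ (by simp [hE]), e1]
    exact h2 t ht
  · intro a ha hab
    have haE : a ∈ E⁻¹ * E := by
      refine Finset.mem_mul.2 ⟨(Ξ (fun f => p (f.1 * a)))⁻¹, Finset.inv_mem_inv (hE _),
        Ξ (fun f => p f.1), hE _, ?_⟩
      rw [hab]; group
    have e2 : (fun f : ↥F' => p (f.1 * a)) = fun f : ↥F' => y (f.1 * (a * t)) := by
      funext f
      rw [← mul_assoc]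
      exact hp _ (Finset.mem_union_right _ (Finset.mul_mem_mul f.2 haE))
    have hat : y (a * t) = 1 := by
      rw [← hp a (Finset.mem_union_left _ (Finset.mem_union_right _ haE)), ha]
    rw [e1, e2] at hab
    have := h3 t (a * t) ht hat (by rw [← mul_assoc, ← hab])
    simpa using this.symm

lemma exists_disjoint_translates {G : Type*} [Group G] [Infinite G] (K : ℕ → Finset G) :
    ∃ t : ℕ → G, ∀ m n, m < n → Disjoint (K m * {t m}) (K n * {t n}) := by
  have step : ∀ (U : Finset G) (n : ℕ), ∃ t : G, Disjoint U (K n * {t}) := by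
    intro U n
    obtain ⟨t, ht⟩ := Infinite.exists_notMem_finset ((K n)⁻¹ * U)
    refine ⟨t, Finset.disjoint_left.2 (fun u hu hut => ht ?_)⟩
    obtain ⟨k, hk, s, hs, rfl⟩ := Finset.mem_mul.1 hut
    rw [Finset.mem_singleton] at hs
    subst hs
    exact Finset.mem_mul.2 ⟨k⁻¹, Finset.inv_mem_inv hk, _, hu, by group⟩
  choose τ hτ using step
  let U : ℕ → Finset G := fun n => Nat.rec ∅ (fun n V => V ∪ K n * {τ V n}) n
  have hU : ∀ n, U (n + 1) = U n ∪ K n * {τ (U n) n} := fun n => rfl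
  have hmono : Monotone U := monotone_nat_of_le_succ (fun n => by
    rw [hU]; exact Finset.subset_union_left)
  refine ⟨fun n => τ (U n) n, fun m n hmn => ?_⟩
  refine Finset.disjoint_of_subset_left ?_ (hτ (U n) n)
  refine subset_trans ?_ (hmono (Nat.succ_le_of_lt hmn))
  show _ ⊆ U (m + 1)
  rw [hU]
  exact Finset.subset_union_right

lemma core_infinite {G : Type*} [Group G] [Countable G] [Infinite G] (hBD : BDComparisonProperty G)
    (Fs : ℕ → Finset G) (hFs : IsFolner Fs) (F : Finset G) (hFne : F.Nonempty)
    (S : Set (G → Fin 3))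
    (hS : ∀ p ∈ S, ∀ g, 1 ≤ ∑ f ∈ F, hv (p (f * g))) :
    ∃ (Q : Finset G) (Ξ : (↥Q → Fin 3) → G), ∀ p ∈ S, p 1 = 1 →
      p (Ξ (fun f => p f.1)) = 2 ∧
      ∀ a, p a = 1 → Ξ (fun f => p f.1) = Ξ (fun f => p (f.1 * a)) * a → a = 1 := by
  rcases S.eq_empty_or_nonempty with rfl | ⟨s0, hs0⟩
  · exact ⟨∅, fun _ => 1, by simp⟩
  -- enumerate all finite patterns
  obtain ⟨en, hen⟩ := exists_surjective_nat ((P : Finset G) × (↥P → Fin 3))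
  have hpat : ∀ i : (P : Finset G) × (↥P → Fin 3), ∃ s ∈ S,
      (∃ p ∈ S, ∀ q : ↥i.1, p q.1 = i.2 q) → ∀ q : ↥i.1, s q.1 = i.2 q := by
    intro i
    by_cases h : ∃ p ∈ S, ∀ q : ↥i.1, p q.1 = i.2 q
    · obtain ⟨p, hp, hq⟩ := h
      exact ⟨p, hp, fun _ => hq⟩
    · exact ⟨s0, hs0, fun h' => absurd h' h⟩
  choose s hsS hs using hpat
  obtain ⟨t, ht⟩ := exists_disjoint_translates (fun n => F⁻¹ * (en n).1)
  have huniq : ∀ g : G, ∀ f ∈ F, ∀ f' ∈ F, ∀ m n, f * g * (t m)⁻¹ ∈ (en m).1 →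
      f' * g * (t n)⁻¹ ∈ (en n).1 → m = n := by
    intro g f hf f' hf' m n hm hn
    have a1 : ∀ k, ∀ f ∈ F, f * g * (t k)⁻¹ ∈ (en k).1 → g ∈ F⁻¹ * (en k).1 * {t k} := by
      intro k f hf hk
      refine Finset.mem_mul.2 ⟨f⁻¹ * (f * g * (t k)⁻¹),
        Finset.mul_mem_mul (Finset.inv_mem_inv hf) hk, t k, by simp, by group⟩
    rcases lt_trichotomy m n with h | h | h
    · exact absurd (a1 n f' hf' hn) (Finset.disjoint_left.1 (ht m n h) (a1 m f hf hm))
    · exact h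
    · exact absurd (a1 m f hf hm) (Finset.disjoint_left.1 (ht n m h) (a1 n f' hf' hn))
  let y : G → Fin 3 := fun g =>
    if h : ∃ n, g * (t n)⁻¹ ∈ (en n).1 then s (en h.choose) (g * (t h.choose)⁻¹) else 2
  obtain ⟨f0, hf0⟩ := hFne
  have hy1 : ∀ n g, g * (t n)⁻¹ ∈ (en n).1 → y g = s (en n) (g * (t n)⁻¹) := by
    intro n g hg
    have h : ∃ n, g * (t n)⁻¹ ∈ (en n).1 := ⟨n, hg⟩
    have hc : h.choose = n := by
      refine huniq (f0⁻¹ * g) f0 hf0 f0 hf0 _ _ ?_ ?_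
      · simpa using h.choose_spec
      · simpa using hg
    simp only [y, dif_pos h, hc]
  have hy2 : ∀ g, (¬ ∃ n, g * (t n)⁻¹ ∈ (en n).1) → y g = 2 := by
    intro g h
    simp only [y, dif_neg h]
  have hy : ∀ g, 1 ≤ ∑ f ∈ F, hv (y (f * g)) := by
    intro g
    by_cases hg : ∃ n, ∃ f ∈ F, f * g * (t n)⁻¹ ∈ (en n).1
    · obtain ⟨n, f1, hf1, hn⟩ := hg
      refine (hS _ (hsS (en n)) (g * (t n)⁻¹)).trans (Finset.sum_le_sum (fun f hf => ?_))
      by_cases h : ∃ m, f * g * (t m)⁻¹ ∈ (en m).1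
      · obtain ⟨m, hm⟩ := h
        have := huniq g f hf f1 hf1 m n hm hn
        subst this
        rw [hy1 m _ hm, mul_assoc]
      · rw [hy2 _ h]
        exact hv_le_one _
    · push Not at hg
      have : ∀ f ∈ F, hv (y (f * g)) = 1 := by
        intro f hf
        rw [hy2 _ (by rintro ⟨n, hn⟩; exact hg n f hf hn)]
        decide
      rw [Finset.sum_congr rfl this]
      have := Finset.card_pos.2 ⟨f0, hf0⟩
      simpa using this
  obtain ⟨F', E, Ξ, hE, h2, h3⟩ := bd_apply hBD Fs hFs F y hy
  refine ⟨F', Ξ, fun p hp hp1 => ?_⟩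
  obtain ⟨n, hn⟩ := hen ⟨F' ∪ {1} ∪ E ∪ E⁻¹ * E ∪ F' * (E⁻¹ * E), fun q => p q.1⟩
  refine local_code y p (t n) F' E Ξ hE h2 h3 (fun q hq => ?_) hp1
  have hq' : q * t n * (t n)⁻¹ ∈ (en n).1 := by
    rw [hn]; simpa using hq
  rw [hy1 n (q * t n) hq', hn]
  have := hs ⟨F' ∪ {1} ∪ E ∪ E⁻¹ * E ∪ F' * (E⁻¹ * E), fun q => p q.1⟩
    ⟨p, hp, fun _ => rfl⟩ ⟨q, hq⟩
  simpa using this.symm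

lemma core_finite {G : Type*} [Group G] [Finite G] (hBD : BDComparisonProperty G)
    (Fs : ℕ → Finset G) (hFs : IsFolner Fs) (F : Finset G)
    (S : Set (G → Fin 3))
    (hS : ∀ p ∈ S, ∀ g, 1 ≤ ∑ f ∈ F, hv (p (f * g))) :
    ∃ (Q : Finset G) (Ξ : (↥Q → Fin 3) → G), ∀ p ∈ S, p 1 = 1 →
      p (Ξ (fun f => p f.1)) = 2 ∧
      ∀ a, p a = 1 → Ξ (fun f => p f.1) = Ξ (fun f => p (f.1 * a)) * a → a = 1 := by
  have := Fintype.ofFinite G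
  let T : Setoid (G → Fin 3) :=
    { r := fun p q => ∃ t, ∀ g, p g = q (g * t)
      iseqv :=
        ⟨fun p => ⟨1, by simp⟩,
         fun {p q} ⟨t, h⟩ => ⟨t⁻¹, fun g => by rw [h]; simp⟩,
         fun {p q r} ⟨t, h⟩ ⟨t', h'⟩ => ⟨t * t', fun g => by rw [h, h', mul_assoc]⟩⟩ }
  let r : (G → Fin 3) → (G → Fin 3) := fun p => (Quotient.mk T p).out
  have hr : ∀ p, ∃ t, ∀ g, p g = r p (g * t) := fun p => T.symm (Quotient.mk_out (s := T) p)
  have hrs : ∀ p a, r (fun g => p (g * a)) = r p := by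
    intro p a
    have : Quotient.mk T (fun g => p (g * a)) = Quotient.mk T p :=
      Quotient.sound (s := T) ⟨a, fun g => rfl⟩
    simp only [r, this]
  have key : ∀ z : G → Fin 3, ∃ (F' E : Finset G) (Ξ : (↥F' → Fin 3) → G),
      (∀ g, 1 ≤ ∑ f ∈ F, hv (z (f * g))) → (∀ b, Ξ b ∈ E) ∧
      (∀ a, z a = 1 → z (Ξ (fun f => z (f.1 * a)) * a) = 2) ∧
      (∀ a b, z a = 1 → z b = 1 →
        Ξ (fun f => z (f.1 * a)) * a = Ξ (fun f => z (f.1 * b)) * b → a = b) := by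
    intro z
    by_cases hz : ∀ g, 1 ≤ ∑ f ∈ F, hv (z (f * g))
    · obtain ⟨F', E, Ξ, h⟩ := bd_apply hBD Fs hFs F z hz
      exact ⟨F', E, Ξ, fun _ => h⟩
    · exact ⟨∅, ∅, fun _ => 1, fun h => absurd h hz⟩
  choose F' E Ξ h using key
  let Θ : (G → Fin 3) → G := fun p => Ξ (r p) (fun f => p f.1)
  refine ⟨Finset.univ, fun b => Θ (fun g => b ⟨g, Finset.mem_univ g⟩), fun p hp hp1 => ?_⟩
  obtain ⟨t, ht⟩ := hr p
  have hz : ∀ g, 1 ≤ ∑ f ∈ F, hv (r p (f * g)) := by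
    intro g
    have := hS p hp (g * t⁻¹)
    refine this.trans (le_of_eq (Finset.sum_congr rfl (fun f _ => ?_)))
    rw [ht]; congr 2; group
  obtain ⟨hE, h2, h3⟩ := h (r p) hz
  have := local_code (r p) p t (F' (r p)) (E (r p)) (Ξ (r p)) hE h2 h3 (fun q _ => ht q) hp1
  refine ⟨this.1, fun a ha hab => this.2 a ha ?_⟩
  have e : Θ (fun g => p (g * a)) = Ξ (r p) (fun f => p (f.1 * a)) := by
    simp only [Θ]
    rw [hrs]
  rw [← e]
  exact hab

/-! ### Banach density comparison implies comparison -/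

lemma comparison_of_bd {G : Type*} [Group G] [Countable G]
    (Fs : ℕ → Finset G) (hFs : IsFolner Fs) (hBD : BDComparisonProperty G) :
    ComparisonProperty G := by
  intro X _ _ _ _ _ _ _ _ A B hA hB hμ
  let pat : X → G → Fin 3 := fun x => yab {g | g • x ∈ A \ B} {g | g • x ∈ B \ A}
  have hdisj : ∀ x : X, Disjoint {g : G | g • x ∈ A \ B} {g : G | g • x ∈ B \ A} := by
    intro x
    rw [Set.disjoint_left]
    rintro g ⟨h1, h2⟩ ⟨h3, h4⟩
    exact h4 h1
  have hpat1 : ∀ x g, pat x g = 1 ↔ g • x ∈ A \ B := by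
    intro x g
    by_cases h1 : g • x ∈ A <;> by_cases h2 : g • x ∈ B <;> simp [pat, yab, h1, h2]
  have hpat2 : ∀ x g, pat x g = 2 ↔ g • x ∈ B \ A := by
    intro x g
    by_cases h1 : g • x ∈ A <;> by_cases h2 : g • x ∈ B <;> simp [pat, yab, h1, h2]
  have hpats : ∀ x g h, pat x (g * h) = pat (h • x) g := by
    intro x g h
    by_cases h1 : (g * h) • x ∈ A <;> by_cases h2 : (g * h) • x ∈ B <;>
      simp [pat, yab, h1, h2, smul_smul]
  let v : X → ℝ := fun x => B.indicator (fun _ => 1) x - A.indicator (fun _ => 1) x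
  have hvv : ∀ x (g : G), v (g • x) = ((hv (pat x g) : ℤ) : ℝ) := by
    intro x g
    by_cases h1 : g • x ∈ A <;> by_cases h2 : g • x ∈ B <;> simp [pat, yab, h1, h2, v, hv]
  have hvc : Continuous v :=
    (continuous_const.indicator (fun x hx => by simp [hB.frontier_eq] at hx)).sub
      (continuous_const.indicator (fun x hx => by simp [hA.frontier_eq] at hx))
  -- a window with positive advantage
  obtain ⟨F, hFne, hF⟩ : ∃ F : Finset G, F.Nonempty ∧ ∀ x : X, 1 ≤ ∑ f ∈ F, hv (pat x f) := by
    by_contra hcon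
    push Not at hcon
    choose x hx using fun n => hcon (Fs n) (hFs.1 n)
    obtain ⟨μ, h1, h2, h3⟩ := exists_inv_measure Fs hFs x
    have h4 := h3 v hvc (fun n => by
      simp only [hvv]
      have : ∑ f ∈ Fs n, hv (pat (x n) f) ≤ 0 := by linarith [hx n]
      exact_mod_cast this)
    have h5 := hμ μ h1 h2
    have iB : Integrable (B.indicator (fun _ => (1 : ℝ))) μ :=
      (integrable_const _).indicator hB.isOpen.measurableSet
    have iA : Integrable (A.indicator (fun _ => (1 : ℝ))) μ :=
      (integrable_const _).indicator hA.isOpen.measurableSet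
    have h6 : ∫ z, v z ∂μ = μ.real B - μ.real A := by
      simp only [v]
      rw [integral_sub iB iA, integral_indicator_const _ hB.isOpen.measurableSet,
        integral_indicator_const _ hA.isOpen.measurableSet]
      simp
    have h7 : μ.real A < μ.real B :=
      (ENNReal.toReal_lt_toReal (measure_ne_top _ _) (measure_ne_top _ _)).2 h5
    linarith
  have hS : ∀ p ∈ Set.range pat, ∀ g, 1 ≤ ∑ f ∈ F, hv (p (f * g)) := by
    rintro _ ⟨x, rfl⟩ g
    simp only [hpats]
    exact hF _
  obtain ⟨Q, Ξ, hΞ⟩ : ∃ (Q : Finset G) (Ξ : (↥Q → Fin 3) → G), ∀ p ∈ Set.range pat, p 1 = 1 →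
      p (Ξ (fun f => p f.1)) = 2 ∧
      ∀ a, p a = 1 → Ξ (fun f => p f.1) = Ξ (fun f => p (f.1 * a)) * a → a = 1 := by
    rcases finite_or_infinite G with h | h
    · exact core_finite hBD Fs hFs F _ hS
    · exact core_infinite hBD Fs hFs F hFne _ hS
  -- continuity of the code
  have hAB : IsClopen (A \ B) := hA.diff hB
  have hBA : IsClopen (B \ A) := hB.diff hA
  let res : X → (↥Q → Fin 3) := fun x q => pat x q.1
  have hres : Continuous res := by
    refine continuous_pi (fun q => ?_)
    have hc : Continuous (fun x : X => q.1 • x) := continuous_const_smul q.1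
    have : IsLocallyConstant (fun x : X => pat x q.1) := by
      rw [IsLocallyConstant.iff_isOpen_fiber]
      have o1 : IsOpen {x : X | pat x q.1 = 1} := by
        simp only [hpat1]; exact hAB.isOpen.preimage hc
      have o2 : IsOpen {x : X | pat x q.1 = 2} := by
        simp only [hpat2]; exact hBA.isOpen.preimage hc
      have o0 : IsOpen {x : X | pat x q.1 = 0} := by
        have : {x : X | pat x q.1 = 0} =
            (fun x : X => q.1 • x) ⁻¹' ((A \ B)ᶜ ∩ (B \ A)ᶜ) := by
          ext x
          have h : ∀ i : Fin 3, i = 0 ↔ ¬ i = 1 ∧ ¬ i = 2 := by decide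
          simp only [Set.mem_ofPred_eq, Set.mem_preimage, Set.mem_inter_iff, Set.mem_compl_iff,
            ← hpat1, ← hpat2]
          exact h _
        rw [this]
        exact (hAB.compl.isOpen.inter hBA.compl.isOpen).preimage hc
      intro i
      fin_cases i
      · exact o0
      · exact o1
      · exact o2
    exact this.continuous
  let ξ : X → G := fun x => if x ∈ A \ B then Ξ (res x) else 1
  have hcl : ∀ s : Set (↥Q → Fin 3), IsClopen (res ⁻¹' s) := fun s =>
    (isClopen_discrete s).preimage hres
  refine subequiv_of_code A B hA ξ ?_ ?_ ?_ ?_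
  · intro g
    have : ξ ⁻¹' {g} = ((A \ B) ∩ res ⁻¹' (Ξ ⁻¹' {g})) ∪ ((A \ B)ᶜ ∩ {_x | (1 : G) = g}) := by
      ext x
      by_cases hx : x ∈ A \ B
      · simp only [Set.mem_preimage, Set.mem_singleton_iff, Set.mem_union, Set.mem_inter_iff,
          Set.mem_compl_iff, ξ, if_pos hx]
        tauto
      · simp only [Set.mem_preimage, Set.mem_singleton_iff, Set.mem_union, Set.mem_inter_iff,
          Set.mem_compl_iff, ξ, if_neg hx, Set.mem_ofPred_eq]
        tauto
    rw [this]
    refine (hAB.inter (hcl _)).union (hAB.compl.inter ?_)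
    by_cases h : (1 : G) = g
    · simp [h, isClopen_univ]
    · simp [h, isClopen_empty]
  · refine ((Set.finite_range Ξ).union (Set.finite_singleton 1)).subset ?_
    rintro _ ⟨x, rfl⟩
    by_cases hx : x ∈ A \ B
    · left; simp only [ξ, if_pos hx]; exact ⟨_, rfl⟩
    · right; simp only [ξ, if_neg hx]; rfl
  · intro x hx
    by_cases h : x ∈ A \ B
    · simp only [ξ, if_pos h]
      have := (hΞ (pat x) ⟨x, rfl⟩ ((hpat1 x 1).2 (by simpa using h))).1
      exact ((hpat2 _ _).1 this).1
    · simp only [ξ, if_neg h, one_smul]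
      by_contra h'
      exact h ⟨hx, h'⟩
  · have hm : ∀ x, x ∈ A \ B → ξ x • x ∈ B \ A := by
      intro x h
      simp only [ξ, if_pos h]
      have := (hΞ (pat x) ⟨x, rfl⟩ ((hpat1 x 1).2 (by simpa using h))).1
      exact (hpat2 _ _).1 this
    intro x hx y hy hxy
    by_cases h : x ∈ A \ B
    · by_cases h' : y ∈ A \ B
      · simp only [ξ, if_pos h, if_pos h'] at hxy
        have hyx : ((Ξ (res y))⁻¹ * Ξ (res x)) • x = y := by
          rw [mul_smul, hxy, inv_smul_smul]
        have := (hΞ (pat x) ⟨x, rfl⟩ ((hpat1 x 1).2 (by simpa using h))).2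
          ((Ξ (res y))⁻¹ * Ξ (res x)) ((hpat1 _ _).2 (by rw [hyx]; exact h')) (by
            simp only [hpats, hyx]
            show Ξ (res x) = Ξ (res y) * _
            group)
        rw [this, one_smul] at hyx
        exact hyx
      · have h1 := hm x h
        rw [hxy] at h1
        simp only [ξ, if_neg h', one_smul] at h1
        exact absurd hy h1.2
    · by_cases h' : y ∈ A \ B
      · have h1 := hm y h'
        rw [← hxy] at h1
        simp only [ξ, if_neg h, one_smul] at h1
        exact absurd hx h1.2
      · simpa only [ξ, if_neg h, if_neg h', one_smul] using hxy

/-! ### Comparison implies Banach density comparison -/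

/-- A subshift of finite type on which the window `F` has positive advantage. -/
def YY (G : Type*) [Group G] [Small.{0} G] (F : Finset G) : Type :=
  {x : Shrink.{0} G → Fin 3 // ∀ g : G, 1 ≤ ∑ f ∈ F, hv (x (equivShrink G (f * g)))}

section YYinst

variable (G : Type*) [Group G] [Small.{0} G] (F : Finset G)

instance : TopologicalSpace (YY G F) := instTopologicalSpaceSubtype

instance : CompactSpace (YY G F) := by
  refine isCompact_iff_compactSpace.1 (IsClosed.isCompact
    (s := {x : Shrink.{0} G → Fin 3 | ∀ g : G, 1 ≤ ∑ f ∈ F, hv (x (equivShrink G (f * g)))}) ?_)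
  have : {x : Shrink.{0} G → Fin 3 | ∀ g : G, 1 ≤ ∑ f ∈ F, hv (x (equivShrink G (f * g)))} =
      ⋂ g : G, {x | 1 ≤ ∑ f ∈ F, hv (x (equivShrink G (f * g)))} := by
    ext x; simp
  rw [this]
  refine isClosed_iInter (fun g => isClosed_le continuous_const ?_)
  refine continuous_finsetSum _ (fun f _ => ?_)
  exact (continuous_of_discreteTopology (f := hv)).comp
    (continuous_apply (A := fun _ : Shrink.{0} G => Fin 3) (equivShrink G (f * g)))

instance [Countable G] : TopologicalSpace.MetrizableSpace (YY G F) := by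
  have : Countable (Shrink.{0} G) := (equivShrink G).symm.countable_iff.2 inferInstance
  exact (Topology.IsEmbedding.subtypeVal (p := fun x : Shrink.{0} G → Fin 3 =>
    ∀ g : G, 1 ≤ ∑ f ∈ F, hv (x (equivShrink G (f * g))))).metrizableSpace

instance : TotallyDisconnectedSpace (YY G F) := by
  unfold YY
  infer_instance

instance : MeasurableSpace (YY G F) := borel _

instance : BorelSpace (YY G F) := ⟨rfl⟩

variable {G F}

noncomputable def YY.at (x : YY G F) (g : G) : Fin 3 := x.1 (equivShrink G g)

lemma YY.ext' {x y : YY G F} (h : ∀ g, x.at g = y.at g) : x = y := by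
  apply Subtype.ext
  funext k
  simpa [YY.at] using h ((equivShrink G).symm k)

lemma YY.at_pos (x : YY G F) (g : G) : 1 ≤ ∑ f ∈ F, hv (x.at (f * g)) := x.2 g

noncomputable def YY.mk' (y : G → Fin 3) (hy : ∀ g, 1 ≤ ∑ f ∈ F, hv (y (f * g))) : YY G F :=
  ⟨fun k => y ((equivShrink G).symm k), fun g => by simpa using hy g⟩

lemma YY.mk'_at (y : G → Fin 3) (hy : ∀ g, 1 ≤ ∑ f ∈ F, hv (y (f * g))) (g : G) :
    (YY.mk' y hy).at g = y g := by
  simp [YY.mk', YY.at]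

noncomputable instance : SMul G (YY G F) where
  smul h x := YY.mk' (fun g => x.at (g * h)) (fun g => by
    simpa only [mul_assoc] using x.at_pos (g * h))

lemma YY.smul_at (h : G) (x : YY G F) (g : G) : (h • x).at g = x.at (g * h) :=
  YY.mk'_at _ _ _

noncomputable instance : MulAction G (YY G F) where
  one_smul x := YY.ext' (fun g => by rw [YY.smul_at, mul_one])
  mul_smul a b x := YY.ext' (fun g => by rw [YY.smul_at, YY.smul_at, YY.smul_at, mul_assoc])

lemma YY.continuous_at (g : G) : Continuous (fun x : YY G F => x.at g) :=
  (continuous_apply _).comp continuous_subtype_val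

instance : ContinuousConstSMul G (YY G F) where
  continuous_const_smul h := by
    refine Continuous.subtype_mk (continuous_pi (fun k => ?_)) _
    exact YY.continuous_at _

lemma YY.nhds_cyl (x : YY G F) (U : Set (YY G F)) (hU : IsOpen U) (hx : x ∈ U) :
    ∃ P : Finset G, ∀ z : YY G F, (∀ q ∈ P, z.at q = x.at q) → z ∈ U := by
  obtain ⟨V, hV, rfl⟩ := isOpen_induced_iff.1 hU
  obtain ⟨I, u, hu, hsub⟩ := isOpen_pi_iff.1 hV x.1 hx
  refine ⟨I.image (equivShrink G).symm, fun z hz => hsub ?_⟩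
  intro k hk
  have := hz ((equivShrink G).symm k) (Finset.mem_image_of_mem _ hk)
  simp only [YY.at, Equiv.apply_symm_apply] at this
  rw [this]
  exact (hu k hk).2

lemma YY.finite_window (k : ℕ) (Ai : Fin k → Set (YY G F)) (hA : ∀ i, IsClopen (Ai i)) :
    ∃ P : Finset G, ∀ x z : YY G F, (∀ q ∈ P, z.at q = x.at q) → ∀ i, z ∈ Ai i ↔ x ∈ Ai i := by
  have h1 : ∀ x : YY G F, ∃ P : Finset G, ∀ z : YY G F, (∀ q ∈ P, z.at q = x.at q) →
      ∀ i, z ∈ Ai i ↔ x ∈ Ai i := by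
    intro x
    have h2 : ∀ i, ∃ P : Finset G, ∀ z : YY G F, (∀ q ∈ P, z.at q = x.at q) →
        (z ∈ Ai i ↔ x ∈ Ai i) := by
      intro i
      by_cases hx : x ∈ Ai i
      · obtain ⟨P, hP⟩ := YY.nhds_cyl x _ (hA i).isOpen hx
        exact ⟨P, fun z hz => iff_of_true (hP z hz) hx⟩
      · obtain ⟨P, hP⟩ := YY.nhds_cyl x _ (hA i).compl.isOpen hx
        exact ⟨P, fun z hz => iff_of_false (hP z hz) hx⟩
    choose P hP using h2
    exact ⟨Finset.univ.biUnion P, fun z hz i => hP i z (fun q hq => hz q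
      (Finset.mem_biUnion.2 ⟨i, Finset.mem_univ i, hq⟩))⟩
  choose P hP using h1
  have hopen : ∀ x, IsOpen {z : YY G F | ∀ q ∈ P x, z.at q = x.at q} := by
    intro x
    have : {z : YY G F | ∀ q ∈ P x, z.at q = x.at q} =
        ⋂ q ∈ P x, {z : YY G F | z.at q = x.at q} := by
      ext z; simp
    rw [this]
    refine isOpen_biInter_finset (fun q _ => ?_)
    exact (isOpen_discrete {x.at q}).preimage (YY.continuous_at q)
  obtain ⟨T, hT⟩ := isCompact_univ.elim_nhds_subcover
    (fun x => {z : YY G F | ∀ q ∈ P x, z.at q = x.at q})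
    (fun x _ => (hopen x).mem_nhds (fun _ _ => rfl))
  refine ⟨T.biUnion P, fun x z hxz i => ?_⟩
  obtain ⟨w, hw, hxw⟩ := Set.mem_iUnion₂.1 (hT.2 (Set.mem_univ x))
  have hzw : ∀ q ∈ P w, z.at q = w.at q := fun q hq => by
    rw [hxz q (Finset.mem_biUnion.2 ⟨w, hw, hq⟩)]
    exact hxw q hq
  rw [hP w z hzw i, hP w x hxw i]

lemma YY.measure_lt (μ : Measure (YY G F)) [IsProbabilityMeasure μ] [SMulInvariantMeasure G (YY G F) μ] :
    μ {x | x.at 1 = 1} < μ {x | x.at 1 = 2} := by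
  have hm : ∀ i, MeasurableSet {x : YY G F | x.at 1 = i} := fun i =>
    ((isOpen_discrete {i}).preimage (YY.continuous_at 1)).measurableSet
  have hm' : ∀ (f : G) (i), MeasurableSet ((fun x : YY G F => f • x) ⁻¹' {x | x.at 1 = i}) :=
    fun f i => (hm i).preimage (continuous_const_smul f).measurable
  have hint : ∀ i, ∫⁻ x, ∑ f ∈ F, ((fun x : YY G F => f • x) ⁻¹' {x | x.at 1 = i}).indicator
      (fun _ => (1 : ENNReal)) x ∂μ = F.card * μ {x | x.at 1 = i} := by
    intro i
    rw [lintegral_finsetSum _ (fun f _ => measurable_const.indicator (hm' f i))]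
    simp only [lintegral_indicator_const (hm' _ i), measure_preimage_smul, one_mul]
    simp
  have hle : ∫⁻ x, (1 + ∑ f ∈ F, ((fun x : YY G F => f • x) ⁻¹' {x | x.at 1 = 1}).indicator
      (fun _ => (1 : ENNReal)) x) ∂μ ≤
      ∫⁻ x, ∑ f ∈ F, ((fun x : YY G F => f • x) ⁻¹' {x | x.at 1 = 2}).indicator
      (fun _ => (1 : ENNReal)) x ∂μ := by
    refine lintegral_mono (fun x => ?_)
    have e : ∀ i, ∑ f ∈ F, ((fun x : YY G F => f • x) ⁻¹' {x | x.at 1 = i}).indicator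
      (fun _ => (1 : ENNReal)) x = (((F.filter (fun f => x.at f = i)).card : ℕ) : ENNReal) := by
      intro i
      rw [Finset.card_filter, Nat.cast_sum]
      refine Finset.sum_congr rfl (fun f _ => ?_)
      by_cases h : x.at f = i <;> simp [Set.indicator, YY.smul_at, h]
    have h1 := x.at_pos 1
    have h2 : ∑ f ∈ F, hv (x.at (f * 1)) =
        ((F.filter (fun f => x.at f = 2)).card : ℤ) - (F.filter (fun f => x.at f = 1)).card := by
      rw [Finset.card_filter, Finset.card_filter]
      push_cast
      rw [← Finset.sum_sub_distrib]
      refine Finset.sum_congr rfl (fun f _ => ?_)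
      have h : ∀ i : Fin 3, i = 0 ∨ i = 1 ∨ i = 2 := by decide
      rw [mul_one]
      rcases h (x.at f) with h | h | h <;> simp [h, hv]
    show 1 + ∑ f ∈ F, _ ≤ ∑ f ∈ F, _
    rw [e 1, e 2]
    have h3 : 1 + (F.filter (fun f => x.at f = 1)).card ≤ (F.filter (fun f => x.at f = 2)).card := by
      rw [h2] at h1
      omega
    have h4 := (Nat.cast_le (α := ENNReal)).2 h3
    rw [Nat.cast_add, Nat.cast_one] at h4
    exact h4
  rw [lintegral_add_left measurable_const, hint 1, hint 2] at hle
  simp only [lintegral_const, measure_univ, mul_one] at hle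
  by_contra hcon
  have h4 : (F.card : ENNReal) * μ {x | x.at 1 = 2} ≤ F.card * μ {x | x.at 1 = 1} := by
    exact mul_le_mul_right (not_lt.1 hcon) _
  have h5 := hle.trans h4
  have hfin : (F.card : ENNReal) * μ {x | x.at 1 = 1} ≠ ⊤ :=
    ENNReal.mul_ne_top (ENNReal.natCast_ne_top _) (measure_ne_top _ _)
  have h6 := ENNReal.lt_add_right hfin one_ne_zero
  rw [add_comm] at h6
  exact absurd h5 (not_le.2 h6)

end YYinst

lemma bd_of_comparison {G : Type*} [Group G] [Countable G] (hC : ComparisonProperty G) :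
    BDComparisonProperty G := by
  rintro A B hAB ⟨Fs, -, hlim⟩
  obtain ⟨F, hF⟩ := exists_window A B hAB Fs hlim
  have : Small.{0} G := inferInstance
  have hcl : ∀ i, IsClopen {x : YY G F | x.at 1 = i} := fun i =>
    (isClopen_discrete {i}).preimage (YY.continuous_at 1)
  obtain ⟨k, Ai, g, hclop, hun, hdis, hsub, hdis'⟩ := hC (YY G F) {x | x.at 1 = 1} {x | x.at 1 = 2}
    (hcl 1) (hcl 2) (fun μ _ _ => YY.measure_lt μ)
  obtain ⟨P, hP⟩ := YY.finite_window k Ai hclop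
  let y0 : YY G F := YY.mk' (yab A B) hF
  have hy0 : ∀ a q, (a • y0).at q = yab A B (q * a) := fun a q => by
    rw [YY.smul_at, YY.mk'_at]
  let Ξ : (↥(P : Set G) → Fin 3) → G := fun b =>
    if h : ∃ i, ∃ x ∈ Ai i, ∀ q : ↥(P : Set G), x.at q.1 = b q then g h.choose else 1
  have hΞ : ∀ i a, a • y0 ∈ Ai i → Ξ (fun f => shiftMap a (yab A B) f.1) = g i := by
    intro i a ha
    have h : ∃ i, ∃ x ∈ Ai i, ∀ q : ↥(P : Set G), x.at q.1 =
        shiftMap a (yab A B) q.1 := ⟨i, _, ha, fun q => hy0 a q.1⟩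
    obtain ⟨x, hx, hxq⟩ := h.choose_spec
    have hx' : a • y0 ∈ Ai h.choose := by
      refine (hP x (a • y0) (fun q hq => ?_) _).2 hx
      rw [hy0, hxq ⟨q, hq⟩]
      rfl
    have : h.choose = i := by
      by_contra hne
      exact Set.disjoint_left.1 (hdis hne) hx' ha
    simp only [Ξ]
    rw [dif_pos h, this]
  have hmem : ∀ a ∈ A, ∃ i, a • y0 ∈ Ai i := by
    intro a ha
    have : a • y0 ∈ {x : YY G F | x.at 1 = 1} := by
      show (a • y0).at 1 = 1
      rw [hy0, one_mul]
      simp [yab, ha]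
    rw [hun] at this
    exact Set.mem_iUnion.1 this
  refine ⟨fun a => Ξ (fun f => shiftMap a (yab A B) f.1) * a,
    ⟨P, insert 1 (Finset.univ.image g), Ξ, ?_, fun a => rfl⟩, ?_, ?_⟩
  · intro b
    simp only [Ξ]
    split_ifs with h
    · simp
    · simp
  · intro a ha
    obtain ⟨i, hi⟩ := hmem a ha
    have h1 := hsub i (Set.smul_mem_smul_set hi)
    simp only [hΞ i a hi]
    have h2 : (g i • a • y0).at 1 = 2 := h1
    rw [smul_smul, hy0, one_mul] at h2
    by_contra hB
    by_cases hA : g i * a ∈ A <;> simp [yab, hA, hB] at h2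
  · intro a ha b hb hab
    obtain ⟨i, hi⟩ := hmem a ha
    obtain ⟨j, hj⟩ := hmem b hb
    simp only [hΞ i a hi, hΞ j b hj] at hab
    have hij : i = j := by
      by_contra hne
      refine Set.disjoint_left.1 (hdis' hne) (Set.smul_mem_smul_set hi) ?_
      rw [smul_smul, hab, ← smul_smul]
      exact Set.smul_mem_smul_set hj
    subst hij
    exact mul_left_cancel hab

theorem stmt11 (G : Type*) [Group G] [Countable G]
    (hAmen : ∃ Fs : ℕ → Finset G, IsFolner Fs) :
    ComparisonProperty G ↔ BDComparisonProperty G := by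
  obtain ⟨Fs, hFs⟩ := hAmen
  exact ⟨bd_of_comparison, comparison_of_bd Fs hFs⟩
end

section
/- Let a countable amenable group G act by homeomorphisms on a zero-dimensional compact metric space X and let A, B ⊆ X be disjoint clopen sets. Then sup_H inf_{μ∈M_H(X)} (μ(B) − μ(A)) = sup_{H'} inf_{μ∈M_{H'}(X)} (μ(B) − μ(A)) = inf_{μ∈M_G(X)} (μ(B) − μ(A)), where H ranges over all finitely generated subgroups of G, H' ranges over all subgroups of G, and M_H(X) denotes the set of Borel probability measures on X invariant under the restricted action of H. -/
/-!
STATEMENT 12 (Lemma `supinf` of the paper):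
For an action of a countable amenable group `G` on a zero-dimensional compact metric
space `X` and disjoint clopen `A, B ⊆ X`:
`sup_H inf_{μ ∈ M_H(X)} (μ(B) − μ(A)) = sup_{H'} inf_{μ ∈ M_{H'}(X)} (μ(B) − μ(A))
  = inf_{μ ∈ M_G(X)} (μ(B) − μ(A))`,
`H` ranging over finitely generated subgroups, `H'` over all subgroups of `G`.
-/

open Filter Topology Pointwise MeasureTheory

/-- `inf_{μ ∈ M_H(X)} (μ(B) − μ(A))`, the infimum over all Borel probability measures on
`X` invariant under the restricted action of the subgroup `H`. -/
noncomputable def subgroupAdv {G : Type*} [Group G] (X : Type*) [TopologicalSpace X]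
    [MeasurableSpace X] [MulAction G X] (H : Subgroup G) (A B : Set X) : ℝ :=
  ⨅ μ : {μ : Measure X // IsProbabilityMeasure μ ∧
      ∀ g ∈ H, ∀ s : Set X, μ ((fun x => g • x) ⁻¹' s) = μ s},
    ((μ.1 B).toReal - (μ.1 A).toReal)

lemma inv_of_tendsto {X ι : Type*} [TopologicalSpace X] [CompactSpace X]
    [TopologicalSpace.MetrizableSpace X] [MeasurableSpace X] [BorelSpace X]
    (L : Filter ι) [L.NeBot] (e : X ≃ₜ X) (μs : ι → ProbabilityMeasure X)
    (μ : ProbabilityMeasure X) (hμ : Tendsto μs L (𝓝 μ))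
    (h : ∀ f : BoundedContinuousFunction X ℝ,
      Tendsto (fun i => (∫ x, f (e x) ∂(μs i : Measure X)) - ∫ x, f x ∂(μs i : Measure X))
        L (𝓝 0)) (s : Set X) :
    (μ : Measure X) (e ⁻¹' s) = (μ : Measure X) s := by
  letI := TopologicalSpace.metrizableSpaceMetric X
  have hmap : Measure.map e.toMeasurableEquiv (μ : Measure X) = μ := by
    haveI : IsFiniteMeasure (Measure.map e.toMeasurableEquiv (μ : Measure X)) :=
      Measure.isFiniteMeasure_map _ _
    apply ext_of_forall_integral_eq_of_IsFiniteMeasure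
    intro f
    rw [integral_map_equiv]
    have h1 := (ProbabilityMeasure.tendsto_iff_forall_integral_tendsto.1 hμ) f
    have h2 := (ProbabilityMeasure.tendsto_iff_forall_integral_tendsto.1 hμ)
      (f.compContinuous ⟨e, e.continuous⟩)
    have h3 := tendsto_nhds_unique (h2.sub h1) (h f)
    exact sub_eq_zero.1 h3
  conv_rhs => rw [← hmap]
  rw [MeasurableEquiv.map_apply]
  rfl

lemma folner_sum {G : Type*} [Group G] (F : Finset G) (hF : F.Nonempty) (h : G) (φ : G → ℝ)
    (C : ℝ) (hC : ∀ g, |φ g| ≤ C) :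
    |(F.card : ℝ)⁻¹ * ∑ g ∈ F, φ (h * g) - (F.card : ℝ)⁻¹ * ∑ g ∈ F, φ g| ≤
      2 * C * (1 - (((({h} : Set G) * (F : Set G)) ∩ (F : Set G)).ncard : ℝ) / F.card) := by
  classical
  set F' : Finset G := F.image (fun g => h * g) with hF'
  have hinj : Function.Injective (fun g : G => h * g) := mul_right_injective h
  have hcard' : F'.card = F.card := Finset.card_image_of_injective _ hinj
  have hset : (({h} : Set G) * (F : Set G)) ∩ (F : Set G) = ((F' ∩ F : Finset G) : Set G) := by
    rw [Finset.coe_inter, hF', Finset.coe_image, Set.singleton_mul]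
  rw [hset, Set.ncard_coe_finset]
  have hpos : (0 : ℝ) < F.card := by exact_mod_cast hF.card_pos
  have hsum : ∑ g ∈ F, φ (h * g) = ∑ g ∈ F', φ g := by
    rw [hF', Finset.sum_image (fun a _ b _ hab => hinj hab)]
  have e1 : ∑ g ∈ F' ∩ F, φ g + ∑ g ∈ F' \ F, φ g = ∑ g ∈ F', φ g :=
    Finset.sum_inter_add_sum_sdiff F' F φ
  have e2 : ∑ g ∈ F ∩ F', φ g + ∑ g ∈ F \ F', φ g = ∑ g ∈ F, φ g :=
    Finset.sum_inter_add_sum_sdiff F F' φ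
  have c1 : ((F' \ F).card : ℝ) = F.card - (F' ∩ F).card := by
    have := Finset.card_inter_add_card_sdiff F' F
    rw [hcard'] at this
    rw [← this]; push_cast; ring
  have c2 : ((F \ F').card : ℝ) = F.card - (F' ∩ F).card := by
    have := Finset.card_inter_add_card_sdiff F F'
    rw [Finset.inter_comm] at this
    rw [← this]; push_cast; ring
  rw [Finset.inter_comm F F'] at e2
  have b : ∀ T : Finset G, |∑ g ∈ T, φ g| ≤ T.card * C := by
    intro T
    calc |∑ g ∈ T, φ g| ≤ ∑ g ∈ T, |φ g| := Finset.abs_sum_le_sum_abs _ _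
      _ ≤ ∑ g ∈ T, C := Finset.sum_le_sum (fun g _ => hC g)
      _ = T.card * C := by simp
  have b1 := b (F' \ F)
  have b2 := b (F \ F')
  rw [c1] at b1
  rw [c2] at b2
  rw [← mul_sub, hsum, ← e1, ← e2, abs_mul, abs_of_pos (inv_pos.2 hpos), inv_mul_le_iff₀ hpos]
  have : (F.card : ℝ) * (2 * C * (1 - ((F' ∩ F).card : ℝ) / F.card))
      = 2 * C * (F.card - (F' ∩ F).card) := by field_simp
  rw [this]
  rw [abs_le] at b1 b2 ⊢
  constructor <;> linarith [b1.1, b1.2, b2.1, b2.2]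

lemma exists_inv {G : Type*} [Group G] {X : Type*} [TopologicalSpace X] [CompactSpace X]
    [TopologicalSpace.MetrizableSpace X] [MeasurableSpace X] [BorelSpace X]
    [MulAction G X] [ContinuousConstSMul G X] [Nonempty X]
    (hAmen : ∃ Fs : ℕ → Finset G, IsFolner Fs) :
    ∃ μ : Measure X, IsProbabilityMeasure μ ∧
      ∀ g : G, ∀ s : Set X, μ ((fun x => g • x) ⁻¹' s) = μ s := by
  obtain ⟨F, hne, hF⟩ := hAmen
  obtain ⟨x⟩ := ‹Nonempty X›
  letI := TopologicalSpace.metrizableSpaceMetric X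
  let m : ℕ → Measure X := fun n => ((F n).card : ENNReal)⁻¹ • ∑ g ∈ F n, Measure.dirac (g • x)
  have hm : ∀ n, IsProbabilityMeasure (m n) := by
    intro n
    constructor
    have h0 : ((F n).card : ENNReal) ≠ 0 := by exact_mod_cast (hne n).card_pos.ne'
    simp [m, ENNReal.inv_mul_cancel h0 (ENNReal.natCast_ne_top _)]
  have hint : ∀ n (f : BoundedContinuousFunction X ℝ),
      ∫ y, f y ∂(m n) = ((F n).card : ℝ)⁻¹ * ∑ g ∈ F n, f (g • x) := by
    intro n f
    simp only [m]
    rw [integral_smul_measure, integral_finsetSum_measure]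
    · simp
    · intro i _
      exact f.integrable _
  let μs : ℕ → ProbabilityMeasure X := fun n => ⟨m n, hm n⟩
  let U : Ultrafilter ℕ := Ultrafilter.of atTop
  obtain ⟨μ, -, hμ⟩ := isCompact_univ.ultrafilter_le_nhds (U.map μs) (by simp)
  have hμ' : Tendsto μs U (𝓝 μ) := hμ
  refine ⟨μ, inferInstance, fun g s => ?_⟩
  refine inv_of_tendsto (U : Filter ℕ) (Homeomorph.smul g) μs μ hμ' (fun f => ?_) s
  have hlim : Tendsto (fun n => 2 * ‖f‖ * (1 - (((({g} : Set G) * (F n : Set G)) ∩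
      (F n : Set G)).ncard : ℝ) / (F n).card)) atTop (𝓝 0) := by
    simpa using ((hF g).const_sub 1).const_mul (2 * ‖f‖)
  refine Tendsto.mono_left ?_ (Ultrafilter.of_le atTop)
  refine squeeze_zero_norm (fun n => ?_) hlim
  have h1 := hint n f
  have h2 := hint n (f.compContinuous ⟨fun y => g • y, continuous_const_smul g⟩)
  have h3 := folner_sum (F n) (hne n) g (fun k => f (k • x)) ‖f‖ (fun k => f.norm_coe_le_norm _)
  simp only [mul_smul] at h3
  simp only [BoundedContinuousFunction.compContinuous_apply, ContinuousMap.coe_mk] at h2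
  show ‖(∫ y, f (g • y) ∂(m n)) - ∫ y, f y ∂(m n)‖ ≤ _
  rw [h1, h2]
  exact h3

theorem stmt12 (G : Type*) [Group G] [Countable G]
    (X : Type*) [TopologicalSpace X] [CompactSpace X] [TopologicalSpace.MetrizableSpace X]
    [TotallyDisconnectedSpace X] [MeasurableSpace X] [BorelSpace X]
    [MulAction G X] [ContinuousConstSMul G X]
    (hAmen : ∃ Fs : ℕ → Finset G, IsFolner Fs)
    (A B : Set X) (hA : IsClopen A) (hB : IsClopen B) (hAB : Disjoint A B) :
    (⨆ H : {H : Subgroup G // H.FG}, subgroupAdv X H.1 A B)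
      = (⨆ H : Subgroup G, subgroupAdv X H A B) ∧
    (⨆ H : Subgroup G, subgroupAdv X H A B) = subgroupAdv X (⊤ : Subgroup G) A B := by
  classical
  letI := TopologicalSpace.metrizableSpaceMetric X
  rcases isEmpty_or_nonempty X with hX | hX
  · have h0 : ∀ H : Subgroup G, subgroupAdv X H A B = 0 := by
      intro H
      have : A = ∅ := Set.eq_empty_of_isEmpty A
      have : B = ∅ := Set.eq_empty_of_isEmpty B
      subst A B
      simp [subgroupAdv]
    simp [h0]
  obtain ⟨ν, hν, hνi⟩ := exists_inv (X := X) hAmen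
  have hbd : ∀ H : Subgroup G, BddBelow (Set.range
      (fun μ : {μ : Measure X // IsProbabilityMeasure μ ∧
        ∀ g ∈ H, ∀ s : Set X, μ ((fun x => g • x) ⁻¹' s) = μ s} =>
        ((μ.1 B).toReal - (μ.1 A).toReal))) := by
    intro H
    refine ⟨-1, ?_⟩
    rintro _ ⟨⟨μ, hμ, -⟩, rfl⟩
    have h1 : (μ A).toReal ≤ 1 := measureReal_le_one
    have h2 : 0 ≤ (μ B).toReal := ENNReal.toReal_nonneg
    show -1 ≤ (μ B).toReal - (μ A).toReal
    linarith
  have hne : ∀ H : Subgroup G, Nonempty {μ : Measure X // IsProbabilityMeasure μ ∧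
        ∀ g ∈ H, ∀ s : Set X, μ ((fun x => g • x) ⁻¹' s) = μ s} :=
    fun H => ⟨⟨ν, hν, fun g _ => hνi g⟩⟩
  have hle : ∀ H : Subgroup G, subgroupAdv X H A B ≤ subgroupAdv X (⊤ : Subgroup G) A B := by
    intro H
    haveI := hne (⊤ : Subgroup G)
    refine le_ciInf (fun μ => ?_)
    exact ciInf_le (hbd H) ⟨μ.1, μ.2.1, fun g _ => μ.2.2 g trivial⟩
  have hsup : (⨆ H : Subgroup G, subgroupAdv X H A B) = subgroupAdv X (⊤ : Subgroup G) A B :=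
    le_antisymm (ciSup_le hle) (le_ciSup (f := fun H : Subgroup G => subgroupAdv X H A B)
      ⟨_, by rintro _ ⟨H, rfl⟩; exact hle H⟩ ⊤)
  refine ⟨?_, hsup⟩
  rw [hsup]
  haveI : Nonempty {H : Subgroup G // H.FG} := ⟨⟨⊥, ⟨∅, by simp⟩⟩⟩
  refine le_antisymm (ciSup_le (fun H => hle H.1)) ?_
  set S := ⨆ H : {H : Subgroup G // H.FG}, subgroupAdv X H.1 A B with hS
  refine le_of_forall_pos_le_add (fun ε hε => ?_)
  have hex : ∀ T : Finset G, ∃ μ : ProbabilityMeasure X,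
      (∀ g ∈ T, ∀ s : Set X, (μ : Measure X) ((fun x => g • x) ⁻¹' s) = (μ : Measure X) s) ∧
      ((μ : Measure X) B).toReal - ((μ : Measure X) A).toReal ≤ S + ε := by
    intro T
    let H : Subgroup G := Subgroup.closure (T : Set G)
    have hHS : subgroupAdv X H A B ≤ S :=
      le_ciSup (f := fun H : {H : Subgroup G // H.FG} => subgroupAdv X H.1 A B)
        ⟨_, by rintro _ ⟨H, rfl⟩; exact hle H.1⟩ ⟨H, ⟨T, rfl⟩⟩
    haveI := hne H
    have hlt : subgroupAdv X H A B < S + ε := by linarith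
    obtain ⟨⟨μ, hμ, hi⟩, hlt'⟩ := exists_lt_of_ciInf_lt hlt
    exact ⟨⟨μ, hμ⟩, fun g hg => hi g (Subgroup.subset_closure hg), hlt'.le⟩
  choose μs hinv hval using hex
  let U : Ultrafilter (Finset G) := Ultrafilter.of atTop
  obtain ⟨μ, -, hμ⟩ := isCompact_univ.ultrafilter_le_nhds (U.map μs) (by simp)
  have hμ' : Tendsto μs U (𝓝 μ) := hμ
  have hcl : ∀ E : Set X, IsClopen E → Tendsto (fun T => ((μs T : Measure X) E).toReal) U
      (𝓝 ((μ : Measure X) E).toReal) := by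
    intro E hE
    refine (ENNReal.tendsto_toReal (measure_ne_top _ _)).comp
      (ProbabilityMeasure.tendsto_measure_of_null_frontier_of_tendsto' hμ' ?_)
    rw [hE.frontier_eq, measure_empty]
  have hfin : ((μ : Measure X) B).toReal - ((μ : Measure X) A).toReal ≤ S + ε :=
    le_of_tendsto ((hcl B hB).sub (hcl A hA)) (Eventually.of_forall hval)
  have hinvμ : ∀ g : G, ∀ s : Set X,
      (μ : Measure X) ((fun x => g • x) ⁻¹' s) = (μ : Measure X) s := by
    intro g s
    refine inv_of_tendsto (U : Filter (Finset G)) (Homeomorph.smul g) μs μ hμ' (fun f => ?_) s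
    refine Tendsto.mono_left ?_ (Ultrafilter.of_le atTop)
    refine tendsto_const_nhds.congr' ?_
    filter_upwards [eventually_ge_atTop {g}] with T hT
    have hgT : g ∈ T := hT (Finset.mem_singleton_self g)
    have hmap : Measure.map (Homeomorph.smul g : X ≃ₜ X).toMeasurableEquiv (μs T : Measure X)
        = μs T := by
      ext s hs
      rw [MeasurableEquiv.map_apply]
      exact hinv T g hgT s
    have := integral_map_equiv (μ := (μs T : Measure X))
      (Homeomorph.smul g : X ≃ₜ X).toMeasurableEquiv f
    rw [hmap] at this
    rw [this]
    exact (sub_self _).symm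
  exact (ciInf_le (hbd ⊤) ⟨μ, inferInstance, fun g _ => hinvμ g⟩).trans hfin
end

section
/- Let G be a countable amenable group. If every finitely generated subgroup H of G has the comparison property, then G has the comparison property. -/
/-!
STATEMENT 13 (Proposition 44 of the paper):
If every finitely generated subgroup of a countable amenable group `G` has the
comparison property, then `G` has the comparison property.
-/

open Filter Topology Pointwise MeasureTheory

theorem stmt13 (G : Type*) [Group G] [Countable G]
    (hAmen : ∃ Fs : ℕ → Finset G, IsFolner Fs)
    (h : ∀ H : Subgroup G, H.FG → ComparisonProperty H) :
    ComparisonProperty G := by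
  classical
  intro X _ _ _ _ _ _ _ _ A B hA hB hμ
  by_contra hcon
  -- for each finite `S`, a measure invariant under the closure of `S`
  have key : ∀ S : Finset G, ∃ μ : ProbabilityMeasure X,
      (∀ g ∈ S, ∀ s : Set X, MeasurableSet s →
        (μ : Measure X) ((fun x => g • x) ⁻¹' s) = (μ : Measure X) s) ∧ μ B ≤ μ A := by
    intro S
    by_contra hS
    push Not at hS
    refine hcon ?_
    have : ContinuousConstSMul (Subgroup.closure (S : Set G)) X :=
      ⟨fun c => continuous_const_smul (c : G)⟩
    obtain ⟨k, Ai, g, h1, h2, h3, h4, h5⟩ :=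
      h (Subgroup.closure (S : Set G)) ⟨S, rfl⟩ X A B hA hB (by
        intro μ hp hinv
        obtain ⟨P, hP⟩ : ∃ P : ProbabilityMeasure X, (P : Measure X) = μ := ⟨⟨μ, hp⟩, rfl⟩
        subst hP
        have h' := ENNReal.coe_lt_coe.2 (hS P (fun g hg s hs =>
          hinv.measure_preimage_smul ⟨g, Subgroup.subset_closure hg⟩ hs))
        rw [ProbabilityMeasure.ennreal_coeFn_eq_coeFn_toMeasure,
          ProbabilityMeasure.ennreal_coeFn_eq_coeFn_toMeasure] at h'
        exact h')
    exact ⟨k, Ai, fun i => (g i : G), h1, h2, h3, h4, h5⟩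
  choose ν hν hνAB using key
  let U : Ultrafilter (Finset G) := Ultrafilter.of atTop
  have hU : (U : Filter (Finset G)) ≤ atTop := Ultrafilter.of_le _
  obtain ⟨μ, -, hlim'⟩ := isCompact_univ.ultrafilter_le_nhds (U.map ν) (by simp)
  have hlim : Tendsto ν U (𝓝 μ) := hlim'
  have hle : μ B ≤ μ A := le_of_tendsto_of_tendsto'
    (ProbabilityMeasure.tendsto_measure_of_isClopen_of_tendsto hlim hB)
    (ProbabilityMeasure.tendsto_measure_of_isClopen_of_tendsto hlim hA) hνAB
  have hinv : ∀ c : G, μ.map (continuous_const_smul c).measurable.aemeasurable = μ := by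
    intro c
    refine tendsto_nhds_unique
      (ProbabilityMeasure.tendsto_map_of_tendsto_of_continuous ν μ hlim
        (continuous_const_smul c)) (hlim.congr' ?_)
    have : ∀ᶠ S in (U : Filter (Finset G)), ({c} : Finset G) ≤ S :=
      hU (eventually_ge_atTop ({c} : Finset G))
    filter_upwards [this] with S hS
    apply Subtype.ext
    ext s hs
    exact ((ProbabilityMeasure.map_apply' (ν S)
      (continuous_const_smul c).measurable.aemeasurable hs).trans
      (hν S c (by simpa using hS) s hs)).symm
  have hlt := hμ μ inferInstance ⟨fun c s hs => by
    conv_rhs => rw [← hinv c]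
    rw [ProbabilityMeasure.map_apply' _ _ hs]⟩
  have hle' := ENNReal.coe_le_coe.2 hle
  simp only [ProbabilityMeasure.ennreal_coeFn_eq_coeFn_toMeasure] at hle'
  exact absurd hlt (not_lt.2 hle')
end

section
/- Every subexponential group G has the comparison property: every action of G by homeomorphisms on a zero-dimensional compact metric space admits comparison. -/
/-!
STATEMENT 18 (Theorem `main` of the paper):
Every subexponential group has the comparison property: every action of a subexponential
group by homeomorphisms on a zero-dimensional compact metric space admits comparison.
-/

open Filter Topology Pointwise MeasureTheory

/-- `G` is subexponential: every finitely generated subgroup has subexponential growth,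
i.e. `(1/n)·log |(R ∪ R⁻¹)^n| → 0` for every finite `R ⊆ G`. -/
def Subexponential (G : Type*) [Group G] : Prop :=
  ∀ R : Finset G,
    Tendsto (fun n : ℕ =>
        Real.log ((((R : Set G) ∪ (R : Set G)⁻¹) ^ n).ncard) / n) atTop (𝓝 0)

set_option linter.unusedSectionVars false
section Match

variable {G : Type*} [Group G] {X : Type*} [TopologicalSpace X] [MulAction G X]

/-- Invariant of the matching phase. -/
structure PInv (A B : Set X) (R : Finset G) (M : G → Set X) (p : X → ℕ) (k : ℕ) : Prop where
  clop : ∀ s, IsClopen (M s)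
  sub : ∀ s a, a ∈ M s → s ∈ R ∧ a ∈ A ∧ s • a ∈ B
  uniq : ∀ s t a, a ∈ M s → a ∈ M t → s = t
  inj : ∀ s t a a', a ∈ M s → a' ∈ M t → s • a = t • a' → a = a'
  pc : ∀ j, IsClopen (p ⁻¹' {j})
  free : ∀ b ∈ B, (∀ s a, a ∈ M s → s • a ≠ b) → p b = 0
  tight : ∀ s a, a ∈ M s → ∀ r ∈ R, r • a ∈ B → p (s • a) ≤ 1 + p (r • a)
  high : ∀ a ∈ A, (∀ s, a ∉ M s) → ∀ r ∈ R, r • a ∈ B → k ≤ p (r • a)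

/-- Positions along a word. -/
def wpos (r s : ℕ → G) : ℕ → G
  | 0 => 1
  | (i+1) => (s i)⁻¹ * (r i * wpos r s i)

/-- Start points of alive augmenting paths following a word. -/
def AugSet (A B : Set X) (R : Finset G) (M : G → Set X) (p : X → ℕ) (k : ℕ) (r s : ℕ → G) :
    Set X :=
  {x | x ∈ A ∧ (∀ t ∈ R, x ∉ M t) ∧
    (∀ i, i ≤ k → r i ∈ R ∧ r i • wpos r s i • x ∈ B ∧ p (r i • wpos r s i • x) = k - i) ∧
    (∀ i, i < k → wpos r s (i+1) • x ∈ M (s i)) ∧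
    (∀ t ∈ R, t⁻¹ • r k • wpos r s k • x ∉ M t)}

lemma smul_wpos_succ (r s : ℕ → G) (i : ℕ) (x : X) :
    s i • wpos r s (i+1) • x = r i • wpos r s i • x := by
  simp [wpos, mul_smul]

/-- The augmented matching. -/
def augM (P : Set X) (M : G → Set X) (k : ℕ) (r s : ℕ → G) (t : G) : Set X :=
  {x | (x ∈ M t ∧ ∀ i, i < k → ∀ y ∈ P, x ≠ wpos r s (i+1) • y) ∨
    ∃ i, i ≤ k ∧ r i = t ∧ ∃ y ∈ P, x = wpos r s i • y}

lemma clopen_smul_preimage [ContinuousConstSMul G X] {C : Set X} (h : IsClopen C) (g : G) :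
    IsClopen {x | g • x ∈ C} := h.preimage (continuous_const_smul g)

lemma clopen_ball_finset {ι : Type*} (R : Finset ι) (f : ι → X → Prop)
    (h : ∀ i ∈ R, IsClopen {x | f i x}) : IsClopen {x | ∀ i ∈ R, f i x} := by
  have : {x | ∀ i ∈ R, f i x} = ⋂ i ∈ R, {x | f i x} := by ext; simp
  rw [this]; exact R.finite_toSet.isClopen_biInter h

lemma clopen_bex_finset {ι : Type*} (R : Finset ι) (f : ι → X → Prop)
    (h : ∀ i ∈ R, IsClopen {x | f i x}) : IsClopen {x | ∃ i ∈ R, f i x} := by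
  have : {x | ∃ i ∈ R, f i x} = ⋃ i ∈ R, {x | f i x} := by ext; simp
  rw [this]; exact R.finite_toSet.isClopen_biUnion h

lemma clopen_const_and {q : Prop} {f : X → Prop} (h : IsClopen {x | f x}) :
    IsClopen {x | q ∧ f x} := by
  by_cases hq : q <;> simp [hq, h, isClopen_empty]

lemma AugSet_clopen [ContinuousConstSMul G X] {A B : Set X} (hA : IsClopen A) (hB : IsClopen B)
    {R : Finset G} {M : G → Set X} {p : X → ℕ} {k : ℕ} (h : PInv A B R M p k) (r s : ℕ → G) :
    IsClopen (AugSet A B R M p k r s) := by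
  have e : AugSet A B R M p k r s = A ∩ ({x | ∀ t ∈ R, x ∉ M t} ∩
    ({x | ∀ i ∈ Finset.range (k+1), r i ∈ R ∧ ((r i • wpos r s i • x ∈ B) ∧
        (r i • wpos r s i • x ∈ p ⁻¹' {k - i}))} ∩
    ({x | ∀ i ∈ Finset.range k, wpos r s (i+1) • x ∈ M (s i)} ∩
    {x | ∀ t ∈ R, t⁻¹ • r k • wpos r s k • x ∉ M t}))) := by
    ext x
    simp [AugSet]
    tauto
  rw [e]
  refine hA.inter (IsClopen.inter ?_ (IsClopen.inter ?_ (IsClopen.inter ?_ ?_)))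
  · exact clopen_ball_finset _ _ fun t _ => (h.clop t).compl
  · refine clopen_ball_finset _ _ fun i _ => clopen_const_and ?_
    simp only [smul_smul]
    exact (clopen_smul_preimage hB _).inter (clopen_smul_preimage (h.pc _) _)
  · exact clopen_ball_finset _ _ fun t _ => clopen_smul_preimage (h.clop _) _
  · refine clopen_ball_finset _ _ fun t _ => ?_
    simp only [smul_smul]
    exact (clopen_smul_preimage (h.clop _) _).compl

lemma augM_clopen [ContinuousConstSMul G X] {P : Set X} (hP : IsClopen P) {M : G → Set X}
    (hM : ∀ s, IsClopen (M s)) (k : ℕ) (r s : ℕ → G) (t : G) : IsClopen (augM P M k r s t) := by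
  have e : augM P M k r s t =
    (M t ∩ {x | ∀ i ∈ Finset.range k, (wpos r s (i+1))⁻¹ • x ∉ P}) ∪
    {x | ∃ i ∈ Finset.range (k+1), r i = t ∧ (wpos r s i)⁻¹ • x ∈ P} := by
    have key : ∀ (g : G) (x : X), (∃ y ∈ P, x = g • y) ↔ g⁻¹ • x ∈ P := by
      intro g x
      constructor
      · rintro ⟨y, hy, rfl⟩; simpa using hy
      · intro h; exact ⟨_, h, by simp⟩
    ext x
    have key2 : ∀ g : G, (∀ y ∈ P, x ≠ g • y) ↔ g⁻¹ • x ∉ P := by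
      intro g
      rw [← key]
      push Not
      rfl
    simp only [augM, Set.mem_ofPred_eq, key, key2, Set.mem_union, Set.mem_inter_iff,
      Finset.mem_range, Nat.lt_succ_iff]
  rw [e]
  refine IsClopen.union (IsClopen.inter (hM t) ?_) ?_
  · exact clopen_ball_finset _ _ fun i _ => (clopen_smul_preimage hP _).compl
  · exact clopen_bex_finset _ _ fun i _ => clopen_const_and (clopen_smul_preimage hP _)

section step
variable {A B : Set X} {R : Finset G} {M : G → Set X} {p : X → ℕ} {k : ℕ}
  {r s : ℕ → G}

lemma PInv.unm (h : PInv A B R M p k) {y : X} (hy : y ∈ AugSet A B R M p k r s) (t : G) :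
    y ∉ M t := fun ht => hy.2.1 t (h.sub t y ht).1 ht

lemma PInv.lastfree (h : PInv A B R M p k) {y : X} (hy : y ∈ AugSet A B R M p k r s) (t : G)
    (a : X) (ha : a ∈ M t) : t • a ≠ r k • wpos r s k • y := by
  intro e
  refine hy.2.2.2.2 t (h.sub t a ha).1 ?_
  rw [← e]; simpa using ha

/-- new edges are dead -/
lemma PInv.dead (h : PInv A B R M p k) {y : X} (hy : y ∈ AugSet A B R M p k r s) {i : ℕ}
    (hi : i ≤ k) {q : G} (hq : q ∈ R) (hB : q • wpos r s i • y ∈ B) :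
    k - i ≤ p (q • wpos r s i • y) := by
  cases i with
  | zero =>
    simp only [wpos, one_smul] at hB ⊢
    exact h.high y hy.1 (h.unm hy) q hq hB
  | succ i =>
    have h1 := hy.2.2.2.1 i (by omega)
    have h2 := h.tight _ _ h1 q hq hB
    rw [smul_wpos_succ, (hy.2.2.1 i (by omega)).2.2] at h2
    omega

lemma PInv.posA (h : PInv A B R M p k) {y : X} (hy : y ∈ AugSet A B R M p k r s) {i : ℕ}
    (hi : i ≤ k) : wpos r s i • y ∈ A := by
  cases i with
  | zero => simpa [wpos] using hy.1
  | succ i => exact (h.sub _ _ (hy.2.2.2.1 i (by omega))).2.1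

lemma PInv.posinj (h : PInv A B R M p k) {y y' : X} (hy : y ∈ AugSet A B R M p k r s)
    (hy' : y' ∈ AugSet A B R M p k r s) {i j : ℕ} (hi : i ≤ k) (hj : j ≤ k)
    (e : wpos r s i • y = wpos r s j • y') : i = j := by
  cases i with
  | zero =>
    cases j with
    | zero => rfl
    | succ j =>
      have := hy'.2.2.2.1 j (by omega)
      rw [← e] at this
      simp only [wpos, one_smul] at this
      exact absurd this (h.unm hy _)
  | succ i =>
    have h1 := hy.2.2.2.1 i (by omega)
    cases j with
    | zero =>
      rw [e] at h1
      simp only [wpos, one_smul] at h1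
      exact absurd h1 (h.unm hy' _)
    | succ j =>
      have h2 := hy'.2.2.2.1 j (by omega)
      rw [← e] at h2
      have h3 := h.uniq _ _ _ h1 h2
      have h4 := smul_wpos_succ r s i y
      rw [h3, e, smul_wpos_succ] at h4
      have h5 := (hy.2.2.1 i (by omega)).2.2
      have h6 := (hy'.2.2.1 j (by omega)).2.2
      rw [← h4] at h5
      omega

lemma PInv.bposinj {y y' : X} (hy : y ∈ AugSet A B R M p k r s)
    (hy' : y' ∈ AugSet A B R M p k r s) {i j : ℕ} (hi : i ≤ k) (hj : j ≤ k)
    (e : r i • wpos r s i • y = r j • wpos r s j • y') : i = j := by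
  have h5 := (hy.2.2.1 i (by omega)).2.2
  have h6 := (hy'.2.2.1 j (by omega)).2.2
  rw [e] at h5
  omega

/-- matched `a` stay matched -/
lemma PInv.stayA {a : X} {t : G} (ha : a ∈ M t) :
    ∃ t', a ∈ augM (AugSet A B R M p k r s) M k r s t' := by
  by_cases hc : ∀ i, i < k → ∀ y ∈ AugSet A B R M p k r s, a ≠ wpos r s (i+1) • y
  · exact ⟨t, Or.inl ⟨ha, hc⟩⟩
  · push Not at hc
    obtain ⟨i, hi, y, hy, e⟩ := hc
    exact ⟨r (i+1), Or.inr ⟨i+1, hi, rfl, y, hy, e⟩⟩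

lemma PInv.stayB (h : PInv A B R M p k) {a : X} {t : G} (ha : a ∈ M t) :
    ∃ t' a', a' ∈ augM (AugSet A B R M p k r s) M k r s t' ∧ t' • a' = t • a := by
  by_cases hc : ∀ i, i < k → ∀ y ∈ AugSet A B R M p k r s, a ≠ wpos r s (i+1) • y
  · exact ⟨t, a, Or.inl ⟨ha, hc⟩, rfl⟩
  · push Not at hc
    obtain ⟨i, hi, y, hy, e⟩ := hc
    refine ⟨r i, wpos r s i • y, Or.inr ⟨i, by omega, rfl, y, hy, rfl⟩, ?_⟩
    have h1 := hy.2.2.2.1 i hi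
    rw [← e] at h1
    rw [h.uniq _ _ _ ha h1, e, smul_wpos_succ]

lemma PInv.aug [ContinuousConstSMul G X] (hA : IsClopen A) (hB : IsClopen B)
    (h : PInv A B R M p k) (r s : ℕ → G) :
    PInv A B R (augM (AugSet A B R M p k r s) M k r s) p k := by
  constructor
  · exact augM_clopen (AugSet_clopen hA hB h r s) h.clop k r s
  · rintro t a (⟨ha, -⟩ | ⟨i, hi, rfl, y, hy, rfl⟩)
    · exact h.sub t a ha
    · exact ⟨(hy.2.2.1 i hi).1, h.posA hy hi, (hy.2.2.1 i hi).2.1⟩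
  · have key : ∀ a t i y, a ∈ M t →
        (∀ i, i < k → ∀ y ∈ AugSet A B R M p k r s, a ≠ wpos r s (i+1) • y) →
        i ≤ k → y ∈ AugSet A B R M p k r s → a = wpos r s i • y → False := by
      intro a t i y ha hn hi hy e
      cases i with
      | zero =>
        simp only [wpos, one_smul] at e
        subst e
        exact h.unm hy _ ha
      | succ i => exact hn i (by omega) y hy e
    rintro t t' a (⟨ha, hn⟩ | ⟨i, hi, rfl, y, hy, e⟩) (⟨ha', hn'⟩ | ⟨i', hi', rfl, y', hy', e'⟩)
    · exact h.uniq _ _ _ ha ha'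
    · exact (key _ _ _ _ ha hn hi' hy' e').elim
    · exact (key _ _ _ _ ha' hn' hi hy e).elim
    · rw [h.posinj hy hy' hi hi' (e.symm.trans e')]
  · have key : ∀ a t i y, a ∈ M t →
        (∀ i, i < k → ∀ y ∈ AugSet A B R M p k r s, a ≠ wpos r s (i+1) • y) →
        i ≤ k → y ∈ AugSet A B R M p k r s → t • a = r i • wpos r s i • y → False := by
      intro a t i y ha hn hi hy e
      rcases Nat.lt_or_ge i k with hik | hik
      · refine hn i hik y hy ?_
        refine h.inj _ _ _ _ ha (hy.2.2.2.1 i hik) ?_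
        rw [smul_wpos_succ, e]
      · obtain rfl : i = k := by omega
        exact h.lastfree hy t a ha e
    rintro t t' a a' (⟨ha, hn⟩ | ⟨i, hi, rfl, y, hy, rfl⟩)
      (⟨ha', hn'⟩ | ⟨i', hi', rfl, y', hy', rfl⟩) e
    · exact h.inj _ _ _ _ ha ha' e
    · exact (key _ _ _ _ ha hn hi' hy' e).elim
    · exact (key _ _ _ _ ha' hn' hi hy e.symm).elim
    · have := PInv.bposinj hy hy' hi hi' e
      subst this
      simpa using e
  · exact h.pc
  · intro b hb hf
    refine h.free b hb fun t a ha e => ?_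
    obtain ⟨t', a', h1, h2⟩ := h.stayB (r := r) (s := s) ha
    exact hf t' a' h1 (h2.trans e)
  · rintro t a (⟨ha, -⟩ | ⟨i, hi, rfl, y, hy, rfl⟩) q hq hqB
    · exact h.tight t a ha q hq hqB
    · have := h.dead hy hi hq hqB
      have := (hy.2.2.1 i hi).2.2
      omega
  · intro a ha hf
    refine h.high a ha fun t ht => ?_
    obtain ⟨t', h1⟩ := PInv.stayA (A := A) (B := B) (R := R) (p := p) (k := k) (r := r) (s := s) ht
    exact hf t' h1

lemma PInv.mono (h : PInv A B R M p k) (r s r' s' : ℕ → G) :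
    AugSet A B R (augM (AugSet A B R M p k r s) M k r s) p k r' s' ⊆ AugSet A B R M p k r' s' := by
  have hR : ∀ t a, a ∈ augM (AugSet A B R M p k r s) M k r s t → t ∈ R := by
    rintro t a (⟨ha, -⟩ | ⟨i, hi, rfl, y, hy, rfl⟩)
    · exact (h.sub t a ha).1
    · exact (hy.2.2.1 i hi).1
  rintro x ⟨h1, h2, h3, h4, h5⟩
  refine ⟨h1, ?_, h3, ?_, ?_⟩
  · intro t ht hx
    obtain ⟨t', ht'⟩ := PInv.stayA (A := A) (B := B) (R := R) (p := p) (k := k) (r := r) (s := s) hx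
    exact h2 t' (hR _ _ ht') ht'
  · intro i hi
    rcases h4 i hi with h6 | ⟨j, hj, e, y, hy, e'⟩
    · exact h6.1
    · exfalso
      have e1 := smul_wpos_succ r' s' i x
      rw [← e, e'] at e1
      have h7 := (hy.2.2.1 j hj).2.2
      rw [e1, (h3 i hi.le).2.2] at h7
      have h8 := h3 (i+1) hi
      rw [e'] at h8
      have := h.dead hy hj h8.1 h8.2.1
      omega
  · intro t ht hx
    obtain ⟨t', a', h6, h7⟩ := h.stayB (r := r) (s := s) hx
    refine h5 t' (hR _ _ h6) ?_
    rw [smul_inv_smul] at h7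
    rw [← h7]; simpa using h6

lemma PInv.killed (h : PInv A B R M p k) (r s : ℕ → G) :
    AugSet A B R (augM (AugSet A B R M p k r s) M k r s) p k r s = ∅ := by
  ext x
  simp only [Set.mem_empty_iff_false, iff_false]
  intro hx
  have hx' := h.mono r s r s hx
  exact hx.2.1 (r 0) (hx'.2.2.1 0 (by omega)).1
    (Or.inr ⟨0, by omega, rfl, x, hx', by simp [wpos]⟩)

lemma PInv.killList [ContinuousConstSMul G X] (hA : IsClopen A) (hB : IsClopen B)
    (h : PInv A B R M p k) (W : Set ((ℕ → G) × (ℕ → G))) (hW : W.Finite) :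
    ∃ M', PInv A B R M' p k ∧ ∀ w ∈ W, AugSet A B R M' p k w.1 w.2 = ∅ := by
  induction W, hW using Set.Finite.induction_on with
  | empty => exact ⟨M, h, by simp⟩
  | @insert w W _ _ ih =>
    obtain ⟨M', h', hk⟩ := ih
    refine ⟨_, h'.aug hA hB w.1 w.2, ?_⟩
    rintro v (rfl | hv)
    · exact h'.killed _ _
    · exact Set.subset_eq_empty (h'.mono _ _ _ _) (hk v hv)

lemma wpos_congr {k : ℕ} {r s r' s' : ℕ → G} (hr : ∀ i ≤ k, r i = r' i) (hs : ∀ i ≤ k, s i = s' i) :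
    ∀ i ≤ k, wpos r s i = wpos r' s' i := by
  intro i
  induction i with
  | zero => intro _; rfl
  | succ i ih =>
    intro hi
    simp only [wpos]
    rw [hr i (by omega), hs i (by omega), ih (by omega)]

lemma AugSet_congr {r' s' : ℕ → G} (hr : ∀ i ≤ k, r i = r' i)
    (hs : ∀ i ≤ k, s i = s' i) : AugSet A B R M p k r s ⊆ AugSet A B R M p k r' s' := by
  have hw := wpos_congr hr hs
  rintro x ⟨h1, h2, h3, h4, h5⟩
  refine ⟨h1, h2, ?_, ?_, ?_⟩
  · intro i hi
    rw [← hr i hi, ← hw i hi]; exact h3 i hi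
  · intro i hi
    rw [← hs i hi.le, ← hw (i+1) hi]; exact h4 i hi
  · rw [← hr k le_rfl, ← hw k le_rfl]; exact h5

lemma PInv.killAll [ContinuousConstSMul G X] (hA : IsClopen A) (hB : IsClopen B)
    (h : PInv A B R M p k) :
    ∃ M', PInv A B R M' p k ∧ ∀ r s : ℕ → G, (∀ i, r i ∈ R) → (∀ i, s i ∈ R) →
      AugSet A B R M' p k r s = ∅ := by
  let f : (Fin (k+1) → R × R) → (ℕ → G) × (ℕ → G) := fun w =>
    (fun i => (w (Fin.ofNat (k+1) i)).1, fun i => (w (Fin.ofNat (k+1) i)).2)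
  obtain ⟨M', h', hk⟩ := h.killList hA hB (Set.range f) (Set.finite_range f)
  refine ⟨M', h', fun r s hr hs => ?_⟩
  let w : Fin (k+1) → R × R := fun i => (⟨r i, hr i⟩, ⟨s i, hs i⟩)
  refine Set.subset_eq_empty ?_ (hk (f w) (Set.mem_range_self w))
  apply AugSet_congr
  · intro i hi
    simp [f, w, Nat.mod_eq_of_lt (Nat.lt_succ_of_le hi)]
  · intro i hi
    simp [f, w, Nat.mod_eq_of_lt (Nat.lt_succ_of_le hi)]

/-- points `b` on alive descending paths -/
def LSet (B : Set X) (R : Finset G) (M : G → Set X) (p : X → ℕ) : ℕ → Set X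
  | 0 => {b | b ∈ B ∧ p b = 0 ∧ ∀ t ∈ R, t⁻¹ • b ∉ M t}
  | (j+1) => {b | b ∈ B ∧ p b = j + 1 ∧ ∃ t ∈ R, ∃ r ∈ R, t⁻¹ • b ∈ M t ∧
      r • t⁻¹ • b ∈ LSet B R M p j}

lemma LSet_mem {j : ℕ} {b : X} (h : b ∈ LSet B R M p j) : b ∈ B ∧ p b = j := by
  cases j with
  | zero => exact ⟨h.1, h.2.1⟩
  | succ j => exact ⟨h.1, h.2.1⟩

lemma LSet_clopen [ContinuousConstSMul G X] (hB : IsClopen B) (hM : ∀ s, IsClopen (M s))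
    (hp : ∀ j, IsClopen (p ⁻¹' {j})) (j : ℕ) : IsClopen (LSet B R M p j) := by
  induction j with
  | zero =>
    exact hB.inter ((hp 0).inter (clopen_ball_finset _ _ fun t _ =>
      (clopen_smul_preimage (hM t) _).compl))
  | succ j ih =>
    refine hB.inter ((hp (j+1)).inter (clopen_bex_finset _ _ fun t _ =>
      (clopen_bex_finset _ _ fun r _ => ?_)))
    refine (clopen_smul_preimage (hM t) _).inter ?_
    simp only [smul_smul]
    exact clopen_smul_preimage ih _

lemma PInv.path (_h : PInv A B R M p k) {x : X} {r₀ : G} (hx : x ∈ A) (hu : ∀ t, x ∉ M t)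
    (hr : r₀ ∈ R) (hL : r₀ • x ∈ LSet B R M p k) :
    ∃ r s : ℕ → G, (∀ i, r i ∈ R) ∧ (∀ i, s i ∈ R) ∧ x ∈ AugSet A B R M p k r s := by
  have key : ∀ b : X, ∃ t ∈ R, ∃ r ∈ R, ∀ j, b ∈ LSet B R M p (j+1) →
      t⁻¹ • b ∈ M t ∧ r • t⁻¹ • b ∈ LSet B R M p j := by
    intro b
    by_cases hb : ∃ j, b ∈ LSet B R M p (j+1)
    · obtain ⟨j, hj⟩ := hb
      obtain ⟨t, ht, r, hr, h1, h2⟩ := hj.2.2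
      refine ⟨t, ht, r, hr, fun j' hj' => ?_⟩
      have e1 := (LSet_mem hj).2
      have e2 := (LSet_mem hj').2
      obtain rfl : j = j' := by omega
      exact ⟨h1, h2⟩
    · exact ⟨r₀, hr, r₀, hr, fun j hj => (hb ⟨j, hj⟩).elim⟩
  choose σ hσ ρ hρ hk using key
  let b : ℕ → X := fun n => Nat.rec (r₀ • x) (fun _ c => ρ c • (σ c)⁻¹ • c) n
  let s : ℕ → G := fun n => σ (b n)
  let r : ℕ → G := fun n => Nat.casesOn n r₀ (fun m => ρ (b m))
  have hb : ∀ i, r i • wpos r s i • x = b i := by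
    intro i
    induction i with
    | zero => simp [wpos, r, b]
    | succ i ih =>
      simp only [wpos, mul_smul]
      rw [ih]
  have hbL : ∀ i ≤ k, b i ∈ LSet B R M p (k - i) := by
    intro i
    induction i with
    | zero => intro _; exact hL
    | succ i ih =>
      intro hi
      have h1 := ih (by omega)
      obtain ⟨j, hj⟩ : ∃ j, k - i = j + 1 := ⟨k - i - 1, by omega⟩
      rw [hj] at h1
      have := (hk (b i) j h1).2
      have e : k - (i+1) = j := by omega
      rw [e]; exact this
  have hrR : ∀ i, r i ∈ R := by
    intro i
    cases i with
    | zero => exact hr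
    | succ i => exact hρ _
  refine ⟨r, s, hrR, fun i => hσ _, hx, fun t _ => hu t, ?_, ?_, ?_⟩
  · intro i hi
    rw [hb]
    exact ⟨hrR i, LSet_mem (hbL i hi)⟩
  · intro i hi
    have h1 := hbL i hi.le
    obtain ⟨j, hj⟩ : ∃ j, k - i = j + 1 := ⟨k - i - 1, by omega⟩
    rw [hj] at h1
    have := (hk (b i) j h1).1
    simp only [wpos, mul_smul]
    rw [hb]
    exact this
  · rw [hb]
    have := hbL k le_rfl
    rw [Nat.sub_self] at this
    exact this.2.2

open Classical in
lemma PInv.relabel [ContinuousConstSMul G X] (hB : IsClopen B)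
    (h : PInv A B R M p k) (hk : ∀ r s : ℕ → G, (∀ i, r i ∈ R) → (∀ i, s i ∈ R) →
      AugSet A B R M p k r s = ∅) : ∃ p', PInv A B R M p' (k+1) := by
  let p' : X → ℕ := fun b => if b ∈ LSet B R M p (p b) then p b else p b + 1
  have hle : ∀ b, p b ≤ p' b := fun b => by simp only [p']; split_ifs <;> omega
  have hle' : ∀ b, p' b ≤ p b + 1 := fun b => by simp only [p']; split_ifs <;> omega
  have hin : ∀ b, b ∈ LSet B R M p (p b) → p' b = p b := fun b hb => if_pos hb
  have hout : ∀ b, b ∉ LSet B R M p (p b) → p' b = p b + 1 := fun b hb => if_neg hb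
  have hLc := LSet_clopen (R := R) hB h.clop h.pc
  refine ⟨p', h.clop, h.sub, h.uniq, h.inj, ?_, ?_, ?_, ?_⟩
  · intro j
    cases j with
    | zero =>
      have : p' ⁻¹' {0} = LSet B R M p 0 := by
        ext b
        simp only [Set.mem_preimage, Set.mem_singleton_iff]
        constructor
        · intro hb
          by_cases hL : b ∈ LSet B R M p (p b)
          · rw [← hin b hL, hb] at hL; exact hL
          · rw [hout b hL] at hb; omega
        · intro hb
          have := (LSet_mem hb).2
          rw [hin b (by rwa [this]), this]
      rw [this]; exact hLc 0
    | succ j =>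
      have : p' ⁻¹' {j+1} = LSet B R M p (j+1) ∪ (p ⁻¹' {j} \ LSet B R M p j) := by
        ext b
        simp only [Set.mem_preimage, Set.mem_singleton_iff, Set.mem_union, Set.mem_sdiff]
        constructor
        · intro hb
          by_cases hL : b ∈ LSet B R M p (p b)
          · rw [← hin b hL, hb] at hL; exact Or.inl hL
          · rw [hout b hL] at hb
            have : p b = j := by omega
            rw [this] at hL
            exact Or.inr ⟨this, hL⟩
        · rintro (hb | ⟨hb, hL⟩)
          · have := (LSet_mem hb).2
            rw [hin b (by rwa [this]), this]
          · rw [hout b (by rwa [hb]), hb]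
      rw [this]; exact (hLc _).union ((h.pc j).diff (hLc j))
  · intro b hb hf
    have h0 := h.free b hb hf
    rw [hin b, h0]
    rw [h0]
    refine ⟨hb, h0, fun t _ ht => hf t _ ht (by simp)⟩
  · intro s a ha r hr hrB
    have h1 := h.tight s a ha r hr hrB
    have h2 := hle (r • a)
    have h3 := hle' (s • a)
    by_cases hL : r • a ∈ LSet B R M p (p (r • a))
    · by_cases h4 : p (s • a) ≤ p (r • a)
      · omega
      · have h5 : p (s • a) = p (r • a) + 1 := by omega
        rw [hin (s • a), h5]
        · omega
        · rw [h5]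
          obtain ⟨hs, -, hsB⟩ := h.sub s a ha
          exact ⟨hsB, h5, s, hs, r, hr, by simpa using ha, by simpa using hL⟩
    · rw [hout _ hL]; omega
  · intro a ha hu r hr hrB
    have h1 := h.high a ha hu r hr hrB
    rcases Nat.lt_or_ge k (p (r • a)) with h2 | h2
    · have := hle (r • a); omega
    · have h3 : p (r • a) = k := by omega
      by_cases hL : r • a ∈ LSet B R M p (p (r • a))
      · rw [h3] at hL
        obtain ⟨r', s', hr', hs', hx⟩ := h.path ha hu hr hL
        rw [hk r' s' hr' hs'] at hx
        exact hx.elim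
      · rw [hout _ hL]; omega

lemma PInv.exists [ContinuousConstSMul G X] (hA : IsClopen A) (hB : IsClopen B) (R : Finset G)
    (k : ℕ) : ∃ M p, PInv A B R M p k := by
  induction k with
  | zero =>
    refine ⟨fun _ => ∅, fun _ => 0, fun _ => isClopen_empty, by simp, by simp, by simp, ?_,
      by simp, by simp, by simp⟩
    intro j
    exact (isClopen_discrete {j}).preimage continuous_const
  | succ k ih =>
    obtain ⟨M, p, h⟩ := ih
    obtain ⟨M', h', hk⟩ := h.killAll hA hB
    obtain ⟨p', h''⟩ := h'.relabel hB hk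
    exact ⟨M', p', h''⟩

/-- growth of the alternating reachable sets -/
lemma PInv.growth (h : PInv A B R M p k) {f : ℕ}
    (hexp : ∀ S : Finset X, (↑S : Set X) ⊆ A → ∃ N : Finset X,
      (∀ b ∈ N, b ∈ B ∧ ∃ r ∈ R, ∃ a ∈ S, b = r • a) ∧ (f + 1) * S.card ≤ f * N.card)
    {a : X} (ha : a ∈ A) (hu : ∀ s, a ∉ M s) :
    ∀ j ≤ k, ∃ S : Finset X, (↑S : Set X) ⊆ A ∧
      (∀ x ∈ S, ∃ g ∈ ((R : Set G) ∪ (R : Set G)⁻¹) ^ (2 * j), x = g • a) ∧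
      (∀ x ∈ S, ∀ r ∈ R, r • x ∈ B → k - j ≤ p (r • x)) ∧
      (f + 1) ^ j ≤ f ^ j * S.card := by
  intro j
  induction j with
  | zero =>
    intro _
    refine ⟨{a}, by simpa using ha, ?_, ?_, by simp⟩
    · intro x hx
      exact ⟨1, by simp, by simpa using hx⟩
    · intro x hx
      obtain rfl : x = a := by simpa using hx
      exact h.high x ha hu
  | succ j ih =>
    intro hj
    obtain ⟨S, hSA, hSg, hSp, hSc⟩ := ih (by omega)
    obtain ⟨N, hN, hNc⟩ := hexp S hSA
    have own : ∀ b : X, ∃ t a', b ∈ N → a' ∈ M t ∧ t • a' = b := by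
      intro b
      by_cases hb : b ∈ N
      · by_contra hcon
        push Not at hcon
        obtain ⟨hbB, r, hr, y, hy, rfl⟩ := hN b hb
        have h1 := h.free _ hbB fun t a' ha' => (hcon t a').2 ha'
        have h2 := hSp y hy r hr hbB
        omega
      · exact ⟨1, b, fun h => (hb h).elim⟩
    choose t o hto using own
    classical
    refine ⟨N.image o, ?_, ?_, ?_, ?_⟩
    · intro x hx
      obtain ⟨b, hb, rfl⟩ := Finset.mem_image.1 (Finset.mem_coe.1 hx)
      exact (h.sub _ _ (hto b hb).1).2.1
    · intro x hx
      obtain ⟨b, hb, rfl⟩ := Finset.mem_image.1 hx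
      obtain ⟨h1, h2⟩ := hto b hb
      obtain ⟨hbB, r, hr, y, hy, e⟩ := hN b hb
      obtain ⟨g, hg, rfl⟩ := hSg y hy
      refine ⟨(t b)⁻¹ * (r * g), ?_, ?_⟩
      · have e2 : 2 * (j+1) = 1 + (1 + 2 * j) := by ring
        rw [e2, pow_add, pow_add, pow_one]
        refine Set.mul_mem_mul (Or.inr ?_) (Set.mul_mem_mul (Or.inl hr) hg)
        simpa using (h.sub _ _ h1).1
      · rw [mul_smul, mul_smul, ← e, eq_inv_smul_iff, h2]
    · intro x hx q hq hqB
      obtain ⟨b, hb, rfl⟩ := Finset.mem_image.1 hx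
      obtain ⟨h1, h2⟩ := hto b hb
      obtain ⟨hbB, r, hr, y, hy, e⟩ := hN b hb
      have h3 := h.tight _ _ h1 q hq hqB
      rw [h2] at h3
      have h4 := hSp y hy r hr (e ▸ hbB)
      rw [← e] at h4
      omega
    · rw [Finset.card_image_of_injOn]
      · calc (f+1)^(j+1) = (f+1) * (f+1)^j := by ring
          _ ≤ (f+1) * (f^j * S.card) := Nat.mul_le_mul_left _ hSc
          _ = f^j * ((f+1) * S.card) := by ring
          _ ≤ f^j * (f * N.card) := Nat.mul_le_mul_left _ hNc
          _ = _ := by ring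
      · intro b hb b' hb' e
        obtain ⟨h1, h2⟩ := hto b hb
        obtain ⟨h1', h2'⟩ := hto b' hb'
        rw [← h2, ← h2']
        rw [← e] at h1' ⊢
        rw [h.uniq _ _ _ h1 h1']

end step

end Match

lemma finite_pow_aux {G : Type*} [Group G] {Q : Set G} (h : Q.Finite) (n : ℕ) : (Q ^ n).Finite := by
  induction n with
  | zero => simp
  | succ n ih => rw [pow_succ]; exact ih.mul h

/-- subexponential growth beats exponential -/
lemma subexp_bound {G : Type*} [Group G] (hsub : Subexponential G) (R : Finset G) {c : ℝ}
    (hc : 1 < c) {d : ℕ} (hd : 0 < d) : ∃ n : ℕ, ((((R : Set G) ∪ (R : Set G)⁻¹) ^ (d * n)).ncard : ℝ) < c ^ n := by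
  have hl : 0 < Real.log c / d := div_pos (Real.log_pos hc) (by positivity)
  have h1 := (hsub R).eventually (gt_mem_nhds hl)
  obtain ⟨n0, hn0⟩ := Filter.eventually_atTop.1 h1
  refine ⟨n0 + 1, ?_⟩
  have h2 := hn0 (d * (n0 + 1)) (by nlinarith)
  set m : ℕ := (((R : Set G) ∪ (R : Set G)⁻¹) ^ (d * (n0+1))).ncard
  rcases Nat.eq_zero_or_pos m with hm | hm
  · rw [hm]; simp; positivity
  · have hd' : (0:ℝ) < d := by exact_mod_cast hd
    have h3 : Real.log m < (n0 + 1 : ℕ) * Real.log c := by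
      push_cast at h2 ⊢
      rw [div_lt_div_iff₀ (by positivity) hd'] at h2
      have : (d:ℝ) * Real.log m < d * ((n0 + 1) * Real.log c) := by nlinarith
      exact lt_of_mul_lt_mul_left this hd'.le
    rw [← Real.log_pow] at h3
    exact (Real.log_lt_log_iff (by positivity) (by positivity)).1 h3

lemma subequiv_of_expansion {G : Type*} [Group G] {X : Type*} [TopologicalSpace X] [MulAction G X]
    [ContinuousConstSMul G X] (hsub : Subexponential G) {A B : Set X} (hA : IsClopen A)
    (hB : IsClopen B) {R : Finset G} {f : ℕ} (hf : 0 < f)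
    (hexp : ∀ S : Finset X, (↑S : Set X) ⊆ A → ∃ N : Finset X,
      (∀ b ∈ N, b ∈ B ∧ ∃ r ∈ R, ∃ a ∈ S, b = r • a) ∧ (f + 1) * S.card ≤ f * N.card) :
    Subequiv G X A B := by
  have hf' : (0:ℝ) < f := by exact_mod_cast hf
  obtain ⟨n, hn⟩ := subexp_bound hsub R (c := (f+1)/f) (by rw [lt_div_iff₀ hf']; linarith)
    (d := 2) (by norm_num)
  obtain ⟨M, p, h⟩ := PInv.exists hA hB R n
  have hall : ∀ a ∈ A, ∃ s, a ∈ M s := by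
    intro a ha
    by_contra hcon
    push Not at hcon
    obtain ⟨S, -, hS, -, hc⟩ := h.growth hexp ha hcon n le_rfl
    set Q := ((R : Set G) ∪ (R : Set G)⁻¹) ^ (2 * n)
    have hQ : Q.Finite := finite_pow_aux (R.finite_toSet.union R.finite_toSet.inv) _
    have h1 : S.card ≤ Q.ncard := by
      have : (↑S : Set X) ⊆ (fun g => g • a) '' Q := by
        intro x hx
        obtain ⟨g, hg, e⟩ := hS x hx
        exact ⟨g, hg, e.symm⟩
      calc S.card = (↑S : Set X).ncard := (Set.ncard_coe_finset S).symm
        _ ≤ _ := Set.ncard_le_ncard this (hQ.image _)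
        _ ≤ _ := Set.ncard_image_le hQ
    have h2 : ((f:ℝ)+1)^n ≤ f^n * Q.ncard := by
      have : (f+1)^n ≤ f^n * Q.ncard := hc.trans (Nat.mul_le_mul_left _ h1)
      exact_mod_cast this
    rw [div_pow, lt_div_iff₀ (by positivity)] at hn
    linarith
  let e := R.equivFin.symm
  refine ⟨R.card, fun i => M (e i), fun i => e i, fun i => h.clop _, ?_, ?_, ?_, ?_⟩
  · ext a
    simp only [Set.mem_iUnion]
    constructor
    · intro ha
      obtain ⟨s, hs⟩ := hall a ha
      exact ⟨e.symm ⟨s, (h.sub _ _ hs).1⟩, by simpa using hs⟩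
    · rintro ⟨i, hi⟩
      exact (h.sub _ _ hi).2.1
  · intro i j hij
    refine Set.disjoint_left.2 fun a h1 h2 => hij ?_
    exact e.injective (Subtype.ext (h.uniq _ _ _ h1 h2))
  · rintro i _ ⟨a, ha, rfl⟩
    exact (h.sub _ _ ha).2.2
  · intro i j hij
    refine Set.disjoint_left.2 ?_
    rintro _ ⟨a, ha, rfl⟩ ⟨a', ha', e'⟩
    have := h.inj _ _ _ _ ha ha' e'.symm
    subst this
    exact hij (e.injective (Subtype.ext (h.uniq _ _ _ ha ha')))

open Classical in
/-- counting: local advantage gives expansion -/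
lemma expansion_of_count {G : Type*} [Group G] {X : Type*} [MulAction G X]
    {A B : Set X} (F : Finset G) (hF : F.Nonempty)
    (hc : ∀ x : X, (F.filter fun g => g • x ∈ A).card < (F.filter fun g => g • x ∈ B).card)
    (S : Finset X) (hS : (↑S : Set X) ⊆ A) : ∃ N : Finset X,
      (∀ b ∈ N, b ∈ B ∧ ∃ r ∈ F * F⁻¹, ∃ a ∈ S, b = r • a) ∧
      (F.card + 1) * S.card ≤ F.card * N.card := by
  let T : Finset X := F⁻¹ • S
  let N : Finset X := (F • T).filter fun b => b ∈ B
  refine ⟨N, ?_, ?_⟩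
  · intro b hb
    obtain ⟨h1, h2⟩ := Finset.mem_filter.1 hb
    obtain ⟨g, hg, x, hx, rfl⟩ := Finset.mem_smul.1 h1
    obtain ⟨g', hg', a, ha, rfl⟩ := Finset.mem_smul.1 hx
    exact ⟨h2, g * g', Finset.mul_mem_mul hg hg', a, ha, (mul_smul _ _ _).symm⟩
  · have h1 : F.card * S.card ≤ ∑ x ∈ T, (F.filter fun g => g • x ∈ A).card := by
      rw [← Finset.card_product, ← Finset.card_sigma]
      refine Finset.card_le_card_of_injOn (fun q => ⟨q.1⁻¹ • q.2, q.1⟩) ?_ ?_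
      · rintro ⟨g, a⟩ hq
        obtain ⟨hg, ha⟩ := Finset.mem_product.1 (Finset.mem_coe.1 hq)
        simp only [Finset.coe_sigma, Set.mem_sigma_iff, Finset.mem_coe, Finset.mem_filter]
        refine ⟨Finset.smul_mem_smul (Finset.inv_mem_inv hg) ha, hg, ?_⟩
        simpa using hS ha
      · rintro ⟨g, a⟩ - ⟨g', a'⟩ - e
        simp only [Sigma.mk.injEq, heq_eq_eq] at e
        obtain ⟨e1, rfl⟩ := e
        simpa using e1
    have h2 : ∑ x ∈ T, (F.filter fun g => g • x ∈ B).card ≤ F.card * N.card := by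
      rw [← Finset.card_product, ← Finset.card_sigma]
      refine Finset.card_le_card_of_injOn (fun q => (q.2, q.2 • q.1)) ?_ ?_
      · rintro ⟨x, g⟩ hq
        simp only [Finset.coe_sigma, Set.mem_sigma_iff, Finset.mem_coe, Finset.mem_filter] at hq
        obtain ⟨hx, hg, hb⟩ := hq
        exact Finset.mem_coe.2 (Finset.mem_product.2 ⟨hg, Finset.mem_filter.2 ⟨Finset.smul_mem_smul hg hx, hb⟩⟩)
      · rintro ⟨x, g⟩ - ⟨x', g'⟩ - e
        simp only [Prod.mk.injEq] at e
        obtain ⟨rfl, e1⟩ := e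
        simpa using e1
    have h3 : ∑ x ∈ T, ((F.filter fun g => g • x ∈ A).card + 1) ≤
        ∑ x ∈ T, (F.filter fun g => g • x ∈ B).card := Finset.sum_le_sum fun x _ => hc x
    rw [Finset.sum_add_distrib] at h3
    simp only [Finset.sum_const, smul_eq_mul, mul_one] at h3
    have h4 : S.card ≤ T.card := by
      obtain ⟨g, hg⟩ := hF
      calc S.card = (g⁻¹ • S).card := (Finset.card_smul_finset _ _).symm
        _ ≤ _ := Finset.card_le_card (Finset.smul_finset_subset_smul (Finset.inv_mem_inv hg))
    nlinarith

open Classical in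
lemma folner_exists {G : Type*} [Group G] (hsub : Subexponential G) (R : Finset G) {δ : ℝ}
    (hδ : 0 < δ) : ∃ F : Finset G, F.Nonempty ∧ ∀ g ∈ R,
      ((F.image (g * ·) \ F).card : ℝ) ≤ δ * F.card := by
  let R' := insert 1 R
  set Q : Set G := ((R' : Set G) ∪ (R' : Set G)⁻¹) with hQd
  have hQ : ∀ n, (Q ^ n).Finite :=
    finite_pow_aux (R'.finite_toSet.union R'.finite_toSet.inv)
  have h1Q : (1 : G) ∈ Q := Or.inl (by simp [R'])
  obtain ⟨n, hn⟩ : ∃ n, ((Q ^ (n+1)).ncard : ℝ) ≤ (1 + δ) * (Q ^ n).ncard := by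
    by_contra hcon
    push Not at hcon
    obtain ⟨n, hn⟩ := subexp_bound hsub R' (c := 1 + δ) (by linarith) (d := 1) one_pos
    rw [one_mul, ← hQd] at hn
    have : ∀ n, (1+δ)^n ≤ ((Q ^ n).ncard : ℝ) := by
      intro n
      induction n with
      | zero => rw [pow_zero, pow_zero, ← Set.singleton_one, Set.ncard_singleton]; simp
      | succ n ih =>
        rw [pow_succ']
        exact (mul_le_mul_of_nonneg_left ih (by linarith)).trans (hcon n).le
    linarith [this n]
  have hsubset : Q ^ n ⊆ Q ^ (n+1) := by
    rw [pow_succ']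
    intro x hx
    simpa using Set.mul_mem_mul h1Q hx
  refine ⟨(hQ n).toFinset, ?_, ?_⟩
  · refine ⟨1, (hQ n).mem_toFinset.2 ?_⟩
    simpa using Set.pow_mem_pow h1Q (n := n)
  · intro g hg
    rw [← Set.ncard_eq_toFinset_card _ (hQ n)]
    have h2 : (hQ n).toFinset.image (g * ·) \ (hQ n).toFinset ⊆
        (hQ (n+1)).toFinset \ (hQ n).toFinset := by
      refine Finset.sdiff_subset_sdiff ?_ subset_rfl
      intro x hx
      obtain ⟨y, hy, rfl⟩ := Finset.mem_image.1 hx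
      rw [Set.Finite.mem_toFinset] at hy ⊢
      rw [pow_succ']
      exact Set.mul_mem_mul (Or.inl (by simp [R', hg])) hy
    have h3 := Finset.card_le_card h2
    have hss : (hQ n).toFinset ⊆ (hQ (n+1)).toFinset := by simpa using hsubset
    rw [Finset.card_sdiff_of_subset hss, ← Set.ncard_eq_toFinset_card _ (hQ n),
      ← Set.ncard_eq_toFinset_card _ (hQ (n+1))] at h3
    have h4 := Set.ncard_le_ncard hsubset (hQ (n+1))
    have h5 : (((hQ n).toFinset.image (g * ·) \ (hQ n).toFinset).card : ℝ) ≤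
        (Q ^ (n+1)).ncard - (Q ^ n).ncard := by
      rw [← Nat.cast_sub h4]; exact_mod_cast h3
    linarith

open Classical in
lemma count_shift {G : Type*} [Group G] {X : Type*} [MulAction G X] (F : Finset G) (g : G)
    (C : Set X) (x : X) :
    (F.filter fun q => g • q • x ∈ C).card ≤
      (F.filter fun q => q • x ∈ C).card + (F.image (g * ·) \ F).card := by
  have h1 : (F.filter fun q => g • q • x ∈ C).card =
      ((F.filter fun q => g • q • x ∈ C).image (g * ·)).card :=
    (Finset.card_image_of_injective _ (mul_right_injective g)).symm
  rw [h1]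
  refine (Finset.card_le_card ?_).trans (Finset.card_union_le _ _)
  intro y hy
  obtain ⟨q, hq, rfl⟩ := Finset.mem_image.1 hy
  obtain ⟨hq, hC⟩ := Finset.mem_filter.1 hq
  rw [smul_smul] at hC
  rw [Finset.mem_union, Finset.mem_filter, Finset.mem_sdiff]
  by_cases h : g * q ∈ F
  · exact Or.inl ⟨h, hC⟩
  · exact Or.inr ⟨Finset.mem_image_of_mem _ hq, h⟩

open Classical in
lemma empirical_exists {G : Type*} [Group G] {X : Type*} [MulAction G X] [MeasurableSpace X]
    (F : Finset G) (hF : F.Nonempty) (x : X) : ∃ ν : ProbabilityMeasure X,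
      ∀ C : Set X, MeasurableSet C →
        ((ν C : NNReal) : ℝ) = ((F.filter fun g => g • x ∈ C).card : ℝ) / F.card := by
  let ν : Measure X := (F.card : ENNReal)⁻¹ • ∑ g ∈ F, Measure.dirac (g • x)
  have hv : ∀ C, MeasurableSet C →
      ν C = (F.card : ENNReal)⁻¹ * ((F.filter fun g => g • x ∈ C).card : ENNReal) := by
    intro C hC
    simp only [ν, Measure.smul_apply, Measure.finsetSum_apply, smul_eq_mul]
    congr 1
    simp [Measure.dirac_apply' _ hC, Set.indicator_apply]
  have hc : (F.card : ENNReal) ≠ 0 := by simpa using hF.ne_empty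
  have hp : IsProbabilityMeasure ν := by
    constructor
    rw [hv _ MeasurableSet.univ]
    simp [ENNReal.inv_mul_cancel hc]
  let π : ProbabilityMeasure X := ⟨ν, hp⟩
  refine ⟨π, fun C hC => ?_⟩
  have : (π C : ENNReal) = ν C := by simp [π]
  have h2 := congrArg ENNReal.toReal (this.trans (hv C hC))
  rw [ENNReal.coe_toReal, ENNReal.toReal_mul, ENNReal.toReal_inv] at h2
  rw [h2]
  simp
  ring

open Classical in
lemma count_exists {G : Type*} [Group G] (hsub : Subexponential G)
    {X : Type*} [TopologicalSpace X] [CompactSpace X] [TopologicalSpace.MetrizableSpace X]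
    [TotallyDisconnectedSpace X] [MeasurableSpace X] [BorelSpace X]
    [MulAction G X] [ContinuousConstSMul G X] {A B : Set X} (hA : IsClopen A) (hB : IsClopen B)
    (hμ : ∀ μ : Measure X, IsProbabilityMeasure μ → SMulInvariantMeasure G X μ → μ A < μ B) :
    ∃ F : Finset G, F.Nonempty ∧ ∀ x : X,
      (F.filter fun g => g • x ∈ A).card < (F.filter fun g => g • x ∈ B).card := by
  by_contra hcon
  push Not at hcon
  have hfol : ∀ i : Finset G × ℕ, ∃ F : Finset G, F.Nonempty ∧ ∀ g ∈ i.1,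
      ((F.image (g * ·) \ F).card : ℝ) ≤ (1 / ((i.2 : ℝ) + 1)) * F.card :=
    fun i => folner_exists hsub i.1 (by positivity)
  choose F hFne hF using hfol
  choose x hx using fun i => hcon (F i) (hFne i)
  choose ν hν using fun i => empirical_exists (F i) (hFne i) (x i)
  let U : Ultrafilter (Finset G × ℕ) := Ultrafilter.of atTop
  obtain ⟨μ, -, hlim⟩ := isCompact_univ.ultrafilter_le_nhds (U.map ν) (by simp)
  have hlim' : Tendsto ν U (𝓝 μ) := hlim
  have hFc : ∀ i, (0:ℝ) < (F i).card := fun i => by exact_mod_cast (hFne i).card_pos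
  have hC : ∀ C : Set X, IsClopen C → Tendsto (fun i => ((ν i C : NNReal) : ℝ)) U (𝓝 (μ C : NNReal)) := by
    intro C hC
    have := ProbabilityMeasure.tendsto_measure_of_null_frontier_of_tendsto hlim'
      (E := C) (by rw [hC.frontier_eq]; simp)
    exact (NNReal.continuous_coe.tendsto _).comp this
  have hAB : ((μ B : NNReal) : ℝ) ≤ (μ A : NNReal) := by
    refine le_of_tendsto_of_tendsto' (hC B hB) (hC A hA) fun i => ?_
    rw [hν i B hB.isOpen.measurableSet, hν i A hA.isOpen.measurableSet]
    have : (((F i).filter fun g => g • x i ∈ B).card : ℝ) ≤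
      ((F i).filter fun g => g • x i ∈ A).card := by exact_mod_cast hx i
    exact div_le_div_of_nonneg_right this (hFc i).le
  have hinv1 : ∀ (g : G) (C : Set X), IsClopen C →
      ((μ ((fun y => g • y) ⁻¹' C) : NNReal) : ℝ) ≤ (μ C : NNReal) := by
    intro g C hCc
    have hpre : IsClopen ((fun y => g • y) ⁻¹' C) := clopen_smul_preimage hCc g
    have h0 : Tendsto (fun i : Finset G × ℕ => 1 / ((i.2 : ℝ) + 1)) U (𝓝 0) := by
      have h1 : Tendsto (fun i : Finset G × ℕ => i.2) atTop atTop := by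
        rw [← Filter.prod_atTop_atTop_eq]; exact tendsto_snd
      exact (tendsto_one_div_add_atTop_nhds_zero_nat.comp h1).mono_left (Ultrafilter.of_le _)
    have h2 := (hC C hCc).add h0
    rw [add_zero] at h2
    refine le_of_tendsto_of_tendsto (hC _ hpre) h2 ?_
    have hev : ∀ᶠ i : Finset G × ℕ in atTop, g ∈ i.1 := by
      filter_upwards [eventually_ge_atTop (({g} : Finset G), 0)] with i hi
      exact hi.1 (by simp)
    filter_upwards [hev.filter_mono (Ultrafilter.of_le _)] with i hi
    rw [hν i _ hpre.isOpen.measurableSet, hν i C hCc.isOpen.measurableSet, div_add' _ _ _ (hFc i).ne']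
    refine div_le_div_of_nonneg_right ?_ (hFc i).le
    have h3 := hF i g hi
    have h4 : (((F i).filter fun q => g • q • x i ∈ C).card : ℝ) ≤
      ((F i).filter fun q => q • x i ∈ C).card + ((F i).image (g * ·) \ F i).card := by
      exact_mod_cast count_shift (F i) g C (x i)
    simp only [Set.mem_preimage]
    linarith
  have hinv : ∀ (g : G) (C : Set X), IsClopen C →
      (μ : Measure X) ((fun y => g • y) ⁻¹' C) = (μ : Measure X) C := by
    intro g C hCc
    have e1 := hinv1 g C hCc
    have e2 := hinv1 g⁻¹ _ (clopen_smul_preimage hCc g)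
    have e3 : ((fun y : X => g⁻¹ • y) ⁻¹' {x | g • x ∈ C}) = C := by ext; simp
    rw [e3] at e2
    have e4 : μ ((fun y => g • y) ⁻¹' C) = μ C := by
      apply NNReal.coe_injective
      exact le_antisymm e1 e2
    rw [← ProbabilityMeasure.ennreal_coeFn_eq_coeFn_toMeasure,
      ← ProbabilityMeasure.ennreal_coeFn_eq_coeFn_toMeasure, e4]
  have hS : SMulInvariantMeasure G X (μ : Measure X) := by
    constructor
    intro g s hs
    have hm : Measurable (fun y : X => g • y) := (continuous_const_smul g).measurable
    have : Measure.map (fun y : X => g • y) (μ : Measure X) = μ := by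
      have : IsProbabilityMeasure (Measure.map (fun y : X => g • y) (μ : Measure X)) :=
        Measure.isProbabilityMeasure_map hm.aemeasurable
      refine ext_of_generate_finite {C : Set X | IsClopen C} ?_ ?_ ?_ ?_
      · rw [BorelSpace.measurable_eq (α := X)]
        let _ := TopologicalSpace.metrizableSpaceMetric X
        exact isTopologicalBasis_isClopen.borel_eq_generateFrom
      · intro C hC D hD _
        exact IsClopen.inter hC hD
      · intro C hC
        rw [Measure.map_apply hm (IsClopen.isOpen hC).measurableSet]
        exact hinv g C hC
      · simp
    rw [← Measure.map_apply hm hs, this]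
  have := hμ μ inferInstance hS
  rw [← ProbabilityMeasure.ennreal_coeFn_eq_coeFn_toMeasure,
      ← ProbabilityMeasure.ennreal_coeFn_eq_coeFn_toMeasure, ENNReal.coe_lt_coe] at this
  exact absurd hAB (not_le.2 (by exact_mod_cast this))

theorem stmt18 (G : Type*) [Group G] [Countable G]
    (hsub : Subexponential G) :
    ComparisonProperty G := by
  classical
  intro X _ _ _ _ _ _ _ _ A B hA hB hμ
  obtain ⟨F, hF, hc⟩ := count_exists hsub hA hB hμ
  refine subequiv_of_expansion hsub hA hB (R := F * F⁻¹) hF.card_pos fun S hS => ?_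
  have hc' := fun x => hc x
  obtain ⟨N, h1, h2⟩ := expansion_of_count F hF (A := A) (B := B) (by convert hc) S hS
  exact ⟨N, by convert h1, h2⟩
end
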